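/- arXiv:2604.15881 — 9 statements merged into one kernel-verified Lean document; each statement's English description precedes it below -/
import Mathlib

section
/- Let μ be a measure on [0, ∞), and let γ > 0 and ξ ≥ 0 be real numbers. Define l*(y) = (y − ξ/γ)_+. Then for every measurable function l : [0, ∞) → [0, ∞), ∫ (ξ·l*(y) + (γ/2)·(y − l*(y))²) dμ(y) ≤ ∫ (ξ·l(y) + (γ/2)·(y − l(y))²) dμ(y), where both integrals are taken in [0, ∞] (both integrands are nonnegative). -/
open MeasureTheory

/-!
Completing the square in the coverage `l`, the cost `ξ * l + γ / 2 * (y - l) ^ 2` equals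
`γ / 2 * (l - (y - ξ / γ)) ^ 2` plus a term independent of `l`. Minimizing it over `l ≥ 0` therefore
amounts to projecting `y - ξ / γ` onto the half-line `[0, ∞)`, for each claim size `y` separately.
-/

/-- The customer's cost of holding coverage `l` against a claim of size `y`: the premium `ξ * l`
plus the penalty `γ / 2 * (y - l) ^ 2` on the retained loss `y - l`. -/
def coverageCost {K : Type*} [Field K] (ξ γ y l : K) : K :=
  ξ * l + γ / 2 * (y - l) ^ 2

theorem isMinOn_abs_sub_Ici {G : Type*} [AddCommGroup G] [LinearOrder G] [IsOrderedAddMonoid G]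
    (x a : G) : IsMinOn (fun z ↦ |z - x|) (Set.Ici a) (max x a) := by
  refine isMinOn_iff.2 fun z (haz : a ≤ z) ↦ ?_
  rcases le_total a x with hax | hxa
  · simp [max_eq_left hax]
  · calc |max x a - x| = a - x := by rw [max_eq_right hxa, abs_of_nonneg (sub_nonneg.2 hxa)]
      _ ≤ z - x := sub_le_sub_right haz x
      _ ≤ |z - x| := le_abs_self _

theorem coverageCost_eq_sq_add {K : Type*} [Field K] [NeZero (2 : K)] {γ : K} (ξ y l : K)
    (hγ : γ ≠ 0) :
    coverageCost ξ γ y l = γ / 2 * (l - (y - ξ / γ)) ^ 2 + (ξ * y - ξ ^ 2 / (2 * γ)) := by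
  unfold coverageCost
  field_simp
  ring

theorem isMinOn_coverageCost_Ici {K : Type*} [Field K] [LinearOrder K] [IsStrictOrderedRing K]
    {γ : K} (ξ y a : K) (hγ : 0 < γ) :
    IsMinOn (coverageCost ξ γ y) (Set.Ici a) (max (y - ξ / γ) a) := by
  refine isMinOn_iff.2 fun l hl ↦ ?_
  have sq_dist_le : (max (y - ξ / γ) a - (y - ξ / γ)) ^ 2 ≤ (l - (y - ξ / γ)) ^ 2 :=
    sq_le_sq.2 (isMinOn_iff.1 (isMinOn_abs_sub_Ici (y - ξ / γ) a) l hl)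
  rw [coverageCost_eq_sq_add _ _ _ hγ.ne', coverageCost_eq_sq_add _ _ _ hγ.ne']
  gcongr

theorem integrated_excess_of_loss_optimal_general {Ω : Type*} [MeasurableSpace Ω] (μ : Measure Ω)
    (γ ξ : ℝ) (hγ : 0 < γ) (Y L : Ω → ℝ) (hL : ∀ᵐ ω ∂μ, 0 ≤ L ω) :
    ∫⁻ ω, ENNReal.ofReal (coverageCost ξ γ (Y ω) (max (Y ω - ξ / γ) 0)) ∂μ ≤
      ∫⁻ ω, ENNReal.ofReal (coverageCost ξ γ (Y ω) (L ω)) ∂μ := by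
  refine lintegral_mono_ae ?_
  filter_upwards [hL] with ω hLω
  exact ENNReal.ofReal_le_ofReal (isMinOn_iff.1 (isMinOn_coverageCost_Ici ξ (Y ω) 0 hγ) (L ω) hLω)

/-- integrated form of the customer's optimal excess-of-loss coverage:
for any measure μ on [0,∞) (i.e. giving no mass to (−∞,0)), γ > 0, ξ ≥ 0, and any
nonnegative measurable coverage function l, the coverage l*(y) = (y − ξ/γ)₊ minimizes
∫ (ξ·l(y) + (γ/2)·(y − l(y))²) dμ(y), the integrals being taken in [0,∞]. -/
theorem integrated_excess_of_loss_optimal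
    (μ : Measure ℝ) (hμ : μ (Set.Iio 0) = 0)
    (γ ξ : ℝ) (hγ : 0 < γ) (hξ : 0 ≤ ξ)
    (l : ℝ → ℝ) (hl_meas : Measurable l) (hl_nonneg : ∀ y, 0 ≤ l y) :
    ∫⁻ y, ENNReal.ofReal
        (ξ * max (y - ξ / γ) 0 + γ / 2 * (y - max (y - ξ / γ) 0) ^ 2) ∂μ ≤
      ∫⁻ y, ENNReal.ofReal (ξ * l y + γ / 2 * (y - l y) ^ 2) ∂μ :=
  integrated_excess_of_loss_optimal_general μ γ ξ hγ id l (.of_forall hl_nonneg)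
end

section
/- Let Y be a nonnegative random variable on a probability space with E[Y²] < ∞, and let γ > 0 and ξ ≥ 0 be real numbers. Then for every d ≥ 0, ξ·E[(Y − ξ/γ)_+] + (γ/2)·E[(min(Y, ξ/γ))²] ≤ ξ·E[(Y − d)_+] + (γ/2)·E[(min(Y, d))²]; that is, the function d ↦ ξ·E[(Y − d)_+] + (γ/2)·E[(min(Y, d))²] on [0, ∞) attains its minimum at d = ξ/γ. -/
open MeasureTheory

/-!
Completing the square in the retained loss `min y d` gives, pointwise,
`ξ (y - d)₊ + (γ / 2) (min y d)² = ξ y - ξ² / (2 γ) + (γ / 2) (min y d - ξ / γ)²`,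
so that only the distance from `min y d` to `ξ / γ` depends on `d`. Since `min y d ≤ y`, and the
point of `(-∞, y]` nearest to `ξ / γ` is `min y (ξ / γ)`, the deductible `ξ / γ` is optimal for
every realization `y` of the loss simultaneously, hence also in expectation.
-/

/-- The cost of a loss `y` insured with deductible `d` in an excess-of-loss contract: the premium
loading `ξ (y - d)₊` on the ceded part plus the risk penalty `(γ / 2) (min y d)²` on the retained
part. Its expectation is the objective to be minimized over `d`. -/
noncomputable def excessOfLossCost (ξ γ y d : ℝ) : ℝ :=
  ξ * max (y - d) 0 + γ / 2 * min y d ^ 2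

theorem abs_min_sub_le_abs_sub_of_le {G : Type*} [AddCommGroup G] [LinearOrder G]
    [IsOrderedAddMonoid G] {a y : G} (m : G) (hay : a ≤ y) : |min y m - m| ≤ |a - m| := by
  rcases le_total y m with hym | hmy
  · rw [min_eq_left hym, abs_sub_comm, abs_sub_comm a, abs_of_nonneg (sub_nonneg.2 hym),
      abs_of_nonneg (sub_nonneg.2 (hay.trans hym))]
    exact sub_le_sub_left hay m
  · rw [min_eq_right hmy, sub_self, abs_zero]
    exact abs_nonneg _

theorem abs_min_le_negPart_add_abs {G : Type*} [AddCommGroup G] [LinearOrder G]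
    [IsOrderedAddMonoid G] (y c : G) : |min y c| ≤ y⁻ + |c| := by
  refine abs_le'.2 ⟨?_, ?_⟩
  · calc
      min y c ≤ c := min_le_right y c
      _ ≤ |c| := le_abs_self c
      _ ≤ y⁻ + |c| := le_add_of_nonneg_left (negPart_nonneg y)
  · rw [← max_neg_neg]
    exact max_le (le_add_of_le_of_nonneg (neg_le_negPart y) (abs_nonneg c))
      (le_add_of_nonneg_of_le (negPart_nonneg y) (neg_le_abs c))

section Pointwise

variable {γ : ℝ} (ξ y d : ℝ)

theorem excessOfLossCost_eq_add_sq (hγ : γ ≠ 0) :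
    excessOfLossCost ξ γ y d =
      ξ * y - ξ ^ 2 / (2 * γ) + γ / 2 * (min y d - ξ / γ) ^ 2 := by
  have ceded_eq : max (y - d) 0 = y - min y d := by
    rw [← max_sub_sub_left, sub_self, max_comm]
  rw [excessOfLossCost, ceded_eq]
  field_simp
  ring

theorem excessOfLossCost_div_le (hγ : 0 < γ) :
    excessOfLossCost ξ γ y (ξ / γ) ≤ excessOfLossCost ξ γ y d := by
  have sq_le : (min y (ξ / γ) - ξ / γ) ^ 2 ≤ (min y d - ξ / γ) ^ 2 :=
    sq_le_sq.2 (abs_min_sub_le_abs_sub_of_le _ (min_le_left y d))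
  rw [excessOfLossCost_eq_add_sq _ _ _ hγ.ne', excessOfLossCost_eq_add_sq _ _ _ hγ.ne']
  gcongr

end Pointwise

section Expectation

open scoped ENNReal

variable {Ω : Type*} [MeasurableSpace Ω] {P : Measure Ω} [IsFiniteMeasure P] {Y : Ω → ℝ}

theorem memLp_min_const_of_memLp_negPart {p : ℝ≥0∞} (hY : AEStronglyMeasurable Y P)
    (hYneg : MemLp (fun ω => (Y ω)⁻) p P) (c : ℝ) : MemLp (fun ω => min (Y ω) c) p P :=
  (hYneg.add (memLp_const |c|)).mono' (hY.inf aestronglyMeasurable_const)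
    (.of_forall fun ω => abs_min_le_negPart_add_abs (Y ω) c)

theorem integrable_max_sub_const_zero (hY : Integrable Y P) (d : ℝ) :
    Integrable (fun ω => max (Y ω - d) 0) P :=
  (hY.sub (integrable_const d)).pos_part

theorem integrable_min_const_sq (hY : AEStronglyMeasurable Y P)
    (hYneg : MemLp (fun ω => (Y ω)⁻) 2 P) (d : ℝ) :
    Integrable (fun ω => min (Y ω) d ^ 2) P :=
  (memLp_min_const_of_memLp_negPart hY hYneg d).integrable_sq

theorem integrable_excessOfLossCost (hY : Integrable Y P)
    (hYneg : MemLp (fun ω => (Y ω)⁻) 2 P) (ξ γ d : ℝ) :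
    Integrable (fun ω => excessOfLossCost ξ γ (Y ω) d) P :=
  ((integrable_max_sub_const_zero hY d).const_mul ξ).add
    ((integrable_min_const_sq hY.aestronglyMeasurable hYneg d).const_mul (γ / 2))

theorem integral_excessOfLossCost (hY : Integrable Y P)
    (hYneg : MemLp (fun ω => (Y ω)⁻) 2 P) (ξ γ d : ℝ) :
    ∫ ω, excessOfLossCost ξ γ (Y ω) d ∂P =
      ξ * (∫ ω, max (Y ω - d) 0 ∂P) + γ / 2 * (∫ ω, min (Y ω) d ^ 2 ∂P) := by
  simp only [excessOfLossCost]
  rw [integral_add ((integrable_max_sub_const_zero hY d).const_mul ξ)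
      ((integrable_min_const_sq hY.aestronglyMeasurable hYneg d).const_mul (γ / 2)),
    integral_const_mul, integral_const_mul]

theorem deductible_optimal_at_xi_div_gamma_general (hY : Integrable Y P)
    (hYneg : MemLp (fun ω => (Y ω)⁻) 2 P) {γ : ℝ} (hγ : 0 < γ) (ξ d : ℝ) :
    ξ * (∫ ω, max (Y ω - ξ / γ) 0 ∂P) + γ / 2 * (∫ ω, (min (Y ω) (ξ / γ)) ^ 2 ∂P) ≤
      ξ * (∫ ω, max (Y ω - d) 0 ∂P) + γ / 2 * (∫ ω, (min (Y ω) d) ^ 2 ∂P) := by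
  rw [← integral_excessOfLossCost hY hYneg, ← integral_excessOfLossCost hY hYneg]
  exact integral_mono (integrable_excessOfLossCost hY hYneg ξ γ (ξ / γ))
    (integrable_excessOfLossCost hY hYneg ξ γ d)
    fun ω => excessOfLossCost_div_le ξ (Y ω) d hγ

end Expectation

/-- for a nonnegative random variable Y with E[Y²] < ∞, γ > 0 and ξ ≥ 0,
the function d ↦ ξ·E[(Y − d)₊] + (γ/2)·E[(min(Y,d))²] on [0,∞) attains its minimum
at d = ξ/γ. -/
theorem deductible_optimal_at_xi_div_gamma
    {Ω : Type*} [MeasurableSpace Ω] (P : Measure Ω) [IsProbabilityMeasure P]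
    (Y : Ω → ℝ) (hY_meas : Measurable Y) (hY_nonneg : ∀ ω, 0 ≤ Y ω)
    (hY2 : Integrable (fun ω => (Y ω) ^ 2) P)
    (γ ξ : ℝ) (hγ : 0 < γ) (hξ : 0 ≤ ξ)
    (d : ℝ) (hd : 0 ≤ d) :
    ξ * (∫ ω, max (Y ω - ξ / γ) 0 ∂P) + γ / 2 * (∫ ω, (min (Y ω) (ξ / γ)) ^ 2 ∂P) ≤
      ξ * (∫ ω, max (Y ω - d) 0 ∂P) + γ / 2 * (∫ ω, (min (Y ω) d) ^ 2 ∂P) := by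
  have hY := (memLp_two_iff_integrable_sq hY_meas.aestronglyMeasurable).2 hY2
  exact deductible_optimal_at_xi_div_gamma_general (hY.integrable one_le_two)
    (by simp [negPart_eq_zero.2 (hY_nonneg _)]) hγ ξ d
end

section
/- Let Y be a nonnegative random variable on a probability space with E[Y²] < ∞, let 0 < γ_L ≤ γ_H, let γ ∈ [γ_L, γ_H], and let ξ ≥ 0. Define J(γ̃) := −ξ·E[(Y − ξ/γ̃)_+] − (γ/2)·E[(min(Y, ξ/γ̃))²] for γ̃ ∈ [γ_L, γ_H]. Then J(γ̃) ≤ J(γ) for every γ̃ ∈ [γ_L, γ_H]; that is, γ̃ = γ is a maximizer of J on [γ_L, γ_H]. -/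
open MeasureTheory

/-!
For a loss `y` and coverage `i`, completing the square turns the disutility `ξ i + (γ / 2) (y - i)²`
into `(γ / 2) (i - (y - ξ / γ))²` plus a term that does not depend on `i`. Over all coverages
`0 ≤ i` it is therefore smallest at the projection `(y - ξ / γ)_+` of `y - ξ / γ` onto `[0, ∞)`.
Integrating, the contract with deductible `ξ / γ` is optimal among all nonnegative coverages, and in
particular among those designed for the various risk aversions.
-/

lemma sq_max_zero_sub_le_sq_sub {R : Type*} [Ring R] [LinearOrder R] [IsStrictOrderedRing R]
    {x i : R} (hi : 0 ≤ i) : (max x 0 - x) ^ 2 ≤ (i - x) ^ 2 := by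
  rcases le_total 0 x with hx | hx
  · simpa only [max_eq_left hx, sub_self, zero_pow two_ne_zero] using sq_nonneg (i - x)
  · rw [max_eq_right hx]
    gcongr

lemma loading_add_retention_eq_sq_add {K : Type*} [Field K] [NeZero (2 : K)] {γ : K} (hγ : γ ≠ 0)
    (ξ y i : K) :
    ξ * i + γ / 2 * (y - i) ^ 2 =
      γ / 2 * (i - (y - ξ / γ)) ^ 2 + (ξ * y - ξ ^ 2 / (2 * γ)) := by
  field_simp
  ring

lemma loading_add_retention_deductible_le {K : Type*} [Field K] [LinearOrder K]
    [IsStrictOrderedRing K] {γ i : K} (hγ : 0 < γ) (hi : 0 ≤ i) (ξ y : K) :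
    ξ * max (y - ξ / γ) 0 + γ / 2 * (y - max (y - ξ / γ) 0) ^ 2 ≤
      ξ * i + γ / 2 * (y - i) ^ 2 := by
  simp only [loading_add_retention_eq_sq_add hγ.ne']
  gcongr γ / 2 * ?_ + _
  exact sq_max_zero_sub_le_sq_sub hi

lemma sub_max_sub_zero_eq_min {G : Type*} [AddCommGroup G] [LinearOrder G] [IsOrderedAddMonoid G]
    (y d : G) : y - max (y - d) 0 = min y d := by
  rw [← min_sub_sub_left, sub_sub_cancel, sub_zero, min_comm]

section CoverageUtility

variable {Ω : Type*} [MeasurableSpace Ω] {P : Measure Ω} {Y I : Ω → ℝ}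

/-- The mean–variance utility, up to a positive affine transformation, of a customer with loss `Y`
and risk aversion `γ` who buys the coverage `I` at the risk loading `ξ`; the retained loss
`Y - I` enters through its second moment. -/
noncomputable def coverageUtility (P : Measure Ω) (Y : Ω → ℝ) (ξ γ : ℝ) (I : Ω → ℝ) : ℝ :=
  -(ξ * ∫ ω, I ω ∂P) - γ / 2 * ∫ ω, (Y ω - I ω) ^ 2 ∂P

lemma coverageUtility_deductible (P : Measure Ω) (Y : Ω → ℝ) (ξ γ d : ℝ) :
    coverageUtility P Y ξ γ (fun ω ↦ max (Y ω - d) 0) =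
      -(ξ * ∫ ω, max (Y ω - d) 0 ∂P) - γ / 2 * ∫ ω, min (Y ω) d ^ 2 ∂P := by
  simp only [coverageUtility, sub_max_sub_zero_eq_min]

lemma integrable_loading_add_retention (hI : Integrable I P)
    (hYI : Integrable (fun ω ↦ (Y ω - I ω) ^ 2) P) (ξ γ : ℝ) :
    Integrable (fun ω ↦ ξ * I ω + γ / 2 * (Y ω - I ω) ^ 2) P :=
  (hI.const_mul ξ).add (hYI.const_mul (γ / 2))

lemma coverageUtility_eq_neg_integral (hI : Integrable I P)
    (hYI : Integrable (fun ω ↦ (Y ω - I ω) ^ 2) P) (ξ γ : ℝ) :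
    coverageUtility P Y ξ γ I = -∫ ω, (ξ * I ω + γ / 2 * (Y ω - I ω) ^ 2) ∂P := by
  rw [integral_add (hI.const_mul ξ) (hYI.const_mul (γ / 2)), integral_const_mul,
    integral_const_mul, neg_add', coverageUtility]

variable [IsFiniteMeasure P]

lemma memLp_deductible {p : ENNReal} (hY : MemLp Y p P) (d : ℝ) :
    MemLp (fun ω ↦ max (Y ω - d) 0) p P :=
  (hY.sub (memLp_const d)).pos_part

theorem truth_telling_risk_attitude_general (hY : MemLp Y 2 P) (hI : MemLp I 2 P)
    (hI_nonneg : 0 ≤ᵐ[P] I) {γ : ℝ} (hγ : 0 < γ) (ξ : ℝ) :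
    coverageUtility P Y ξ γ I ≤ coverageUtility P Y ξ γ (fun ω ↦ max (Y ω - ξ / γ) 0) := by
  have hD := memLp_deductible hY (ξ / γ)
  have hI_int := hI.integrable one_le_two
  have hD_int := hD.integrable one_le_two
  have hYI_int := (hY.sub hI).integrable_sq
  have hYD_int := (hY.sub hD).integrable_sq
  rw [coverageUtility_eq_neg_integral hI_int hYI_int,
    coverageUtility_eq_neg_integral hD_int hYD_int, neg_le_neg_iff]
  refine integral_mono_ae (integrable_loading_add_retention hD_int hYD_int ξ γ)
    (integrable_loading_add_retention hI_int hYI_int ξ γ) ?_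
  filter_upwards [hI_nonneg] with ω hω
  exact loading_add_retention_deductible_le hγ hω ξ (Y ω)

end CoverageUtility

/-- truth-telling under risk-attitude uncertainty. For a nonnegative
random variable Y with E[Y²] < ∞, 0 < γ_L ≤ γ_H, γ ∈ [γ_L, γ_H] and ξ ≥ 0, the
function J(γ̃) := −ξ·E[(Y − ξ/γ̃)₊] − (γ/2)·E[(min(Y, ξ/γ̃))²] on [γ_L, γ_H]
is maximized at γ̃ = γ. -/
theorem truth_telling_risk_attitude
    {Ω : Type*} [MeasurableSpace Ω] (P : Measure Ω) [IsProbabilityMeasure P]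
    (Y : Ω → ℝ) (hY_meas : Measurable Y) (hY_nonneg : ∀ ω, 0 ≤ Y ω)
    (hY2 : Integrable (fun ω => (Y ω) ^ 2) P)
    (γL γH γ ξ : ℝ) (hγL : 0 < γL) (hγLH : γL ≤ γH)
    (hγ : γ ∈ Set.Icc γL γH) (hξ : 0 ≤ ξ)
    (J : ℝ → ℝ)
    (hJ : ∀ γt : ℝ, J γt =
      -(ξ * (∫ ω, max (Y ω - ξ / γt) 0 ∂P)) -
        γ / 2 * (∫ ω, (min (Y ω) (ξ / γt)) ^ 2 ∂P)) :
    ∀ γt ∈ Set.Icc γL γH, J γt ≤ J γ := by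
  intro γt _
  have hY : MemLp Y 2 P := (memLp_two_iff_integrable_sq hY_meas.aestronglyMeasurable).2 hY2
  simpa only [hJ, coverageUtility_deductible] using
    truth_telling_risk_attitude_general hY (memLp_deductible hY (ξ / γt))
      (.of_forall fun ω ↦ le_max_right _ _) (hγL.trans_le hγ.1) ξ
end

section
/- Let θ_L < θ_H be real numbers, ξ₀ > 0, K > 0, and let φ : [θ_L, θ_H] × ℝ → ℝ be continuous with 0 ≤ φ(θ, x) ≤ K for all θ ∈ [θ_L, θ_H] and all x ∈ [0, ξ₀]. Assume (1 + ξ₀)·e^{−K·(θ_H − θ_L)} ≥ 1. Let A be the set of continuous functions ξ : [θ_L, θ_H] → ℝ with ξ(θ_L) = ξ₀ and 0 ≤ ξ(θ) ≤ ξ₀ for all θ, and for ξ ∈ A define (Tξ)(θ) := (1 + ξ₀)·exp(−∫_{θ_L}^{θ} φ(z, ξ(z)) dz) − 1. Then for every ξ ∈ A, the function Tξ is continuous, satisfies (Tξ)(θ_L) = ξ₀, and 0 ≤ (Tξ)(θ) ≤ ξ₀ for all θ ∈ [θ_L, θ_H]; that is, T maps A into itself. -/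
open MeasureTheory

/-- The solution `y` of the linear initial value problem `y' = -(1 + y) ρ`, `y a = y₀`, for
continuous `ρ`, in closed form. The operator `T` sends `ξ` to the solution with rate
`ρ z = φ z (ξ z)`. -/
noncomputable def loadingOfRate (ρ : ℝ → ℝ) (a y₀ θ : ℝ) : ℝ :=
  (1 + y₀) * Real.exp (-(∫ z in a..θ, ρ z)) - 1

section LoadingOfRate

variable {ρ : ℝ → ℝ} {a b y₀ K : ℝ}

lemma loadingOfRate_left : loadingOfRate ρ a y₀ a = y₀ := by
  simp [loadingOfRate]

lemma continuousOn_loadingOfRate (hab : a ≤ b) (hρ : IntegrableOn ρ (Set.Icc a b)) :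
    ContinuousOn (loadingOfRate ρ a y₀) (Set.Icc a b) := by
  rw [← Set.uIcc_of_le hab] at hρ ⊢
  have primitive_continuousOn := intervalIntegral.continuousOn_primitive_interval hρ
  exact (continuousOn_const.mul primitive_continuousOn.neg.rexp).sub continuousOn_const

lemma integral_mem_Icc_of_mem_Icc_zero (hab : a ≤ b)
    (hρ : ∀ z ∈ Set.Icc a b, ρ z ∈ Set.Icc 0 K) :
    ∫ z in a..b, ρ z ∈ Set.Icc 0 (K * (b - a)) := by
  refine ⟨intervalIntegral.integral_nonneg hab fun z hz => (hρ z hz).1, ?_⟩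
  have norm_le : ∀ z ∈ Set.uIoc a b, ‖ρ z‖ ≤ K := fun z hz => by
    rw [Set.uIoc_of_le hab] at hz
    have hρz := hρ z (Set.Ioc_subset_Icc_self hz)
    exact (Real.norm_of_nonneg hρz.1).trans_le hρz.2
  calc ∫ z in a..b, ρ z ≤ ‖∫ z in a..b, ρ z‖ := Real.le_norm_self _
    _ ≤ K * |b - a| := intervalIntegral.norm_integral_le_of_norm_le_const norm_le
    _ = K * (b - a) := by rw [abs_of_nonneg (sub_nonneg.2 hab)]

lemma loadingOfRate_mem_Icc_of_integral_mem_Icc {M θ : ℝ} (hM : 1 ≤ (1 + y₀) * Real.exp (-M))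
    (hint : ∫ z in a..θ, ρ z ∈ Set.Icc 0 M) : loadingOfRate ρ a y₀ θ ∈ Set.Icc 0 y₀ := by
  have one_add_nonneg : 0 ≤ 1 + y₀ :=
    (pos_of_mul_pos_left (one_pos.trans_le hM) (Real.exp_nonneg _)).le
  have one_le : 1 ≤ (1 + y₀) * Real.exp (-∫ z in a..θ, ρ z) :=
    hM.trans (by gcongr; exact hint.2)
  have le_one_add : (1 + y₀) * Real.exp (-∫ z in a..θ, ρ z) ≤ 1 + y₀ :=
    mul_le_of_le_one_right one_add_nonneg (Real.exp_le_one_iff.2 (neg_nonpos.2 hint.1))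
  exact ⟨sub_nonneg.2 one_le, sub_le_iff_le_add'.2 le_one_add⟩

lemma loadingOfRate_mem_Icc (hρ : ∀ z ∈ Set.Icc a b, ρ z ∈ Set.Icc 0 K)
    (hgrow : 1 ≤ (1 + y₀) * Real.exp (-(K * (b - a)))) {θ : ℝ} (hθ : θ ∈ Set.Icc a b) :
    loadingOfRate ρ a y₀ θ ∈ Set.Icc 0 y₀ := by
  have K_nonneg : 0 ≤ K := (hρ θ hθ).1.trans (hρ θ hθ).2
  have integral_mem : ∫ z in a..θ, ρ z ∈ Set.Icc 0 (K * (θ - a)) :=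
    integral_mem_Icc_of_mem_Icc_zero hθ.1 fun z hz => hρ z ⟨hz.1, hz.2.trans hθ.2⟩
  have bound_le : K * (θ - a) ≤ K * (b - a) := by gcongr; exact hθ.2
  exact loadingOfRate_mem_Icc_of_integral_mem_Icc hgrow
    (Set.Icc_subset_Icc_right bound_le integral_mem)

end LoadingOfRate

theorem T_maps_A_into_itself_general {θL θH ξ₀ K : ℝ} (hθ : θL ≤ θH) {φ : ℝ → ℝ → ℝ}
    (hφcont : ContinuousOn (fun p : ℝ × ℝ => φ p.1 p.2) (Set.Icc θL θH ×ˢ Set.Icc 0 ξ₀))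
    (hφbd : ∀ θ ∈ Set.Icc θL θH, ∀ x ∈ Set.Icc 0 ξ₀, φ θ x ∈ Set.Icc 0 K)
    (hgrow : 1 ≤ (1 + ξ₀) * Real.exp (-(K * (θH - θL)))) {ξ : ℝ → ℝ}
    (hξcont : ContinuousOn ξ (Set.Icc θL θH))
    (hξbd : Set.MapsTo ξ (Set.Icc θL θH) (Set.Icc 0 ξ₀)) :
    ContinuousOn (loadingOfRate (fun z => φ z (ξ z)) θL ξ₀) (Set.Icc θL θH) ∧
      loadingOfRate (fun z => φ z (ξ z)) θL ξ₀ θL = ξ₀ ∧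
      Set.MapsTo (loadingOfRate (fun z => φ z (ξ z)) θL ξ₀) (Set.Icc θL θH) (Set.Icc 0 ξ₀) := by
  have rate_continuousOn : ContinuousOn (fun z => φ z (ξ z)) (Set.Icc θL θH) :=
    hφcont.comp (continuousOn_id.prodMk hξcont) fun z hz => ⟨hz, hξbd hz⟩
  have rate_mem : ∀ z ∈ Set.Icc θL θH, φ z (ξ z) ∈ Set.Icc 0 K :=
    fun z hz => hφbd z hz (ξ z) (hξbd hz)
  exact ⟨continuousOn_loadingOfRate hθ rate_continuousOn.integrableOn_Icc, loadingOfRate_left,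
    fun _ => loadingOfRate_mem_Icc rate_mem hgrow⟩

/-- the self-map part of Lemma 4.5. Under the stated bounds on φ and
the condition (1 + ξ₀)·e^{−K(θ_H − θ_L)} ≥ 1, the operator
(Tξ)(θ) = (1 + ξ₀)·exp(−∫_{θ_L}^θ φ(z, ξ(z)) dz) − 1 maps the set A of continuous
functions ξ on [θ_L, θ_H] with ξ(θ_L) = ξ₀ and 0 ≤ ξ ≤ ξ₀ into itself. -/
theorem T_maps_A_into_itself
    (θL θH ξ₀ K : ℝ) (hθ : θL < θH) (hξ₀ : 0 < ξ₀) (hK : 0 < K)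
    (φ : ℝ → ℝ → ℝ)
    (hφcont : ContinuousOn (fun p : ℝ × ℝ => φ p.1 p.2)
      (Set.Icc θL θH ×ˢ (Set.univ : Set ℝ)))
    (hφbd : ∀ θ ∈ Set.Icc θL θH, ∀ x ∈ Set.Icc (0 : ℝ) ξ₀,
      0 ≤ φ θ x ∧ φ θ x ≤ K)
    (hgrow : 1 ≤ (1 + ξ₀) * Real.exp (-(K * (θH - θL))))
    (ξ : ℝ → ℝ)
    (hξcont : ContinuousOn ξ (Set.Icc θL θH))
    (hξL : ξ θL = ξ₀)
    (hξbd : ∀ θ ∈ Set.Icc θL θH, 0 ≤ ξ θ ∧ ξ θ ≤ ξ₀)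
    (Tξ : ℝ → ℝ)
    (hT : ∀ θ : ℝ, Tξ θ =
      (1 + ξ₀) * Real.exp (-(∫ z in θL..θ, φ z (ξ z))) - 1) :
    ContinuousOn Tξ (Set.Icc θL θH) ∧ Tξ θL = ξ₀ ∧
      ∀ θ ∈ Set.Icc θL θH, 0 ≤ Tξ θ ∧ Tξ θ ≤ ξ₀ := by
  obtain rfl : Tξ = loadingOfRate (fun z => φ z (ξ z)) θL ξ₀ := funext hT
  exact T_maps_A_into_itself_general hθ.le (hφcont.mono (Set.prod_mono_right (Set.subset_univ _)))
    hφbd hgrow hξcont hξbd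
end

section
/- Let θ_L < θ_H be real numbers, ξ₀ > 0, K > 0, M > 0, and let φ : [θ_L, θ_H] × ℝ → ℝ be continuous with 0 ≤ φ(θ, x) ≤ K and |φ(θ, x₁) − φ(θ, x₂)| ≤ M·|x₁ − x₂| for all θ ∈ [θ_L, θ_H] and all x, x₁, x₂ ∈ [0, ξ₀]. Assume (1 + ξ₀)·M·(θ_H − θ_L) < 1 and (1 + ξ₀)·e^{−K·(θ_H − θ_L)} ≥ 1. Then there exists a unique continuous function ξ : [θ_L, θ_H] → ℝ with ξ(θ_L) = ξ₀ and 0 ≤ ξ(θ) ≤ ξ₀ for all θ such that ξ(θ) = (1 + ξ₀)·exp(−∫_{θ_L}^{θ} φ(z, ξ(z)) dz) − 1 for all θ ∈ [θ_L, θ_H]. -/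
open MeasureTheory

/-!
Write `T ξ θ = (1 + ξ₀) * exp (-∫ z in θL..θ, φ z (ξ z)) - 1`. Since `0 ≤ φ ≤ K`, the integral lies
in `[0, K * (θH - θL)]`, so `T` preserves the continuous curves with values in `[0, ξ₀]`. Since
`x ↦ exp (-x)` is `1`-Lipschitz on `[0, ∞)`, `T` satisfies the Volterra estimate
`|T ξ θ - T η θ| ≤ L * ∫ z in θL..θ, |ξ z - η z|` with `L = (1 + ξ₀) * M`. Iterating it, `T^[n]` is
Lipschitz for the sup distance with constant `(L * (θH - θL)) ^ n / n!`, which is less than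
`1` for large `n`. So some iterate of `T` is a contraction of a complete metric space, and `T` has
exactly one fixed point.
-/

section VolterraOperators

open Set Function
open scoped Nat NNReal

variable {X : Type*} [MetricSpace X] {a b L : ℝ} {hab : a ≤ b}
  {T : C(Icc a b, X) → C(Icc a b, X)}

/-- The estimate satisfied by a Volterra integral operator whose kernel is `L`-Lipschitz in the
unknown curve. The projection `projIcc` extends curves on `[a, b]` to `ℝ`, so that they can be
integrated. -/
def IsVolterraLipschitz (hab : a ≤ b) (L : ℝ) (T : C(Icc a b, X) → C(Icc a b, X)) : Prop :=
  ∀ (u v : C(Icc a b, X)) (t : Icc a b),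
    dist (T u t) (T v t) ≤
      L * ∫ s in a..t, dist (u (projIcc a b hab s)) (v (projIcc a b hab s))

lemma integral_sub_left_pow (a t : ℝ) (n : ℕ) :
    ∫ s in a..t, (s - a) ^ n = (t - a) ^ (n + 1) / (n + 1) := by
  simp [intervalIntegral.integral_comp_sub_right (fun s => s ^ n) a, integral_pow]

namespace IsVolterraLipschitz

lemma dist_iterate_apply_le (hT : IsVolterraLipschitz hab L T) (hL : 0 ≤ L)
    (u v : C(Icc a b, X)) (n : ℕ) (t : Icc a b) :
    dist (T^[n] u t) (T^[n] v t) ≤ (L * (t - a)) ^ n / n ! * dist u v := by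
  induction n generalizing t with
  | zero => simpa using ContinuousMap.dist_apply_le_dist (f := u) (g := v) t
  | succ n ih =>
    rw [iterate_succ_apply', iterate_succ_apply']
    have ih_extended : ∀ s ∈ Icc a (t : ℝ),
        dist (T^[n] u (projIcc a b hab s)) (T^[n] v (projIcc a b hab s)) ≤
          (L * (s - a)) ^ n / n ! * dist u v := fun s hs => by
      simpa only [projIcc_of_mem hab ⟨hs.1, hs.2.trans t.2.2⟩] using
        ih ⟨s, hs.1, hs.2.trans t.2.2⟩
    calc dist (T (T^[n] u) t) (T (T^[n] v) t)
      _ ≤ L * ∫ s in a..t,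
            dist (T^[n] u (projIcc a b hab s)) (T^[n] v (projIcc a b hab s)) := hT _ _ t
      _ ≤ L * ∫ s in a..t, (L * (s - a)) ^ n / n ! * dist u v := by
        gcongr
        exact intervalIntegral.integral_mono_on t.2.1
          (Continuous.intervalIntegrable (by fun_prop) _ _)
          (Continuous.intervalIntegrable (by fun_prop) _ _) ih_extended
      _ = L * (L ^ n * ((t - a) ^ (n + 1) / (n + 1)) / n ! * dist u v) := by
        simp only [mul_pow, intervalIntegral.integral_mul_const, intervalIntegral.integral_div,
          intervalIntegral.integral_const_mul, integral_sub_left_pow]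
      _ = (L * (t - a)) ^ (n + 1) / (n + 1)! * dist u v := by
        rw [Nat.factorial_succ, mul_pow, pow_succ' L]
        push_cast
        field_simp

lemma dist_iterate_le (hT : IsVolterraLipschitz hab L T) (hL : 0 ≤ L) (u v : C(Icc a b, X))
    (n : ℕ) : dist (T^[n] u) (T^[n] v) ≤ (L * (b - a)) ^ n / n ! * dist u v := by
  have : 0 ≤ b - a := sub_nonneg.2 hab
  refine (ContinuousMap.dist_le (by positivity)).2 fun t =>
    (hT.dist_iterate_apply_le hL u v n t).trans ?_
  have : 0 ≤ (t : ℝ) - a := sub_nonneg.2 t.2.1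
  gcongr
  exact t.2.2

lemma exists_contractingWith_iterate (hT : IsVolterraLipschitz hab L T) (hL : 0 ≤ L) :
    ∃ (n : ℕ) (C : ℝ≥0), ContractingWith C T^[n] := by
  obtain ⟨n, hn⟩ := (FloorSemiring.tendsto_pow_div_factorial_atTop
    (L * (b - a))).eventually_lt_const zero_lt_one |>.exists
  have : 0 ≤ b - a := sub_nonneg.2 hab
  have hC : 0 ≤ (L * (b - a)) ^ n / n ! := by positivity
  exact ⟨n, ⟨_, hC⟩, hn, LipschitzWith.of_dist_le_mul fun u v => hT.dist_iterate_le hL u v n⟩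

theorem existsUnique_isFixedPt [CompleteSpace X] [Nonempty X] (hT : IsVolterraLipschitz hab L T)
    (hL : 0 ≤ L) : ∃! u, IsFixedPt T u := by
  have : Nonempty C(Icc a b, X) := ⟨.const _ (Classical.arbitrary X)⟩
  obtain ⟨n, C, hC⟩ := hT.exists_contractingWith_iterate hL
  exact ⟨_, hC.isFixedPt_fixedPoint_iterate, fun u hu => hC.fixedPoint_unique (hu.iterate n)⟩

end IsVolterraLipschitz

end VolterraOperators

section Curves

open Set

variable {E : Type*} [TopologicalSpace E] {a b : ℝ} {S : Set E} {ξ : ℝ → E}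

/-- The curves that are continuous on `[a, b]` and take values in `S` there. They are functions on
all of `ℝ`, with arbitrary values outside `[a, b]`. -/
def curvesIn (a b : ℝ) (S : Set E) : Set (ℝ → E) :=
  {ξ | ContinuousOn ξ (Icc a b) ∧ MapsTo ξ (Icc a b) S}

/-- The element of `C([a, b], S)` given by a curve in `S`. -/
def restrictCurve (hξ : ξ ∈ curvesIn a b S) : C(Icc a b, S) :=
  ⟨hξ.2.restrict, hξ.1.mapsToRestrict hξ.2⟩

/-- The extension of an element of `C([a, b], S)` to `ℝ` that is constant on each side of
`[a, b]`. -/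
noncomputable def extendCurve (hab : a ≤ b) (u : C(Icc a b, S)) (s : ℝ) : E :=
  u (projIcc a b hab s)

lemma extendCurve_coe (hab : a ≤ b) (u : C(Icc a b, S)) (t : Icc a b) :
    extendCurve hab u t = u t := by
  rw [extendCurve, projIcc_val]

lemma extendCurve_mem_curvesIn (hab : a ≤ b) (u : C(Icc a b, S)) :
    extendCurve hab u ∈ curvesIn a b S :=
  ⟨(continuous_subtype_val.comp (u.continuous.comp continuous_projIcc)).continuousOn,
    fun _ _ => (u _).2⟩

lemma eqOn_extendCurve_restrictCurve (hab : a ≤ b) (hξ : ξ ∈ curvesIn a b S) :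
    EqOn (extendCurve hab (restrictCurve hξ)) ξ (Icc a b) :=
  fun t ht => extendCurve_coe hab (restrictCurve hξ) ⟨t, ht⟩

lemma continuousOn_comp_of_mem_curvesIn {G : Type*} [TopologicalSpace G] {f : ℝ → E → G}
    (hf : ContinuousOn (fun p : ℝ × E => f p.1 p.2) (Icc a b ×ˢ S)) (hξ : ξ ∈ curvesIn a b S) :
    ContinuousOn (fun z => f z (ξ z)) (Icc a b) :=
  hf.comp (continuousOn_id.prodMk hξ.1) fun _ hz => ⟨hz, hξ.2 hz⟩

end Curves

section VolterraFixedPoint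

open Set Function

variable {a b t L : ℝ}

lemma intervalIntegrable_left_of_continuousOn_Icc {G : Type*} [NormedAddCommGroup G] {f : ℝ → G}
    (hf : ContinuousOn f (Icc a b)) (ht : t ∈ Icc a b) : IntervalIntegrable f volume a t :=
  (hf.mono (Icc_subset_Icc_right ht.2)).intervalIntegrable_of_Icc ht.1

lemma integral_dist_comp_le {E G : Type*} [PseudoMetricSpace E] [PseudoMetricSpace G] {S : Set E}
    {f : ℝ → E → G} {ξ η : ℝ → E}
    (hf : ContinuousOn (fun p : ℝ × E => f p.1 p.2) (Icc a b ×ˢ S))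
    (hlip : ∀ z ∈ Icc a b, ∀ x ∈ S, ∀ y ∈ S, dist (f z x) (f z y) ≤ L * dist x y)
    (hξ : ξ ∈ curvesIn a b S) (hη : η ∈ curvesIn a b S) (ht : t ∈ Icc a b) :
    ∫ z in a..t, dist (f z (ξ z)) (f z (η z)) ≤ L * ∫ z in a..t, dist (ξ z) (η z) := by
  have hat : Icc a t ⊆ Icc a b := Icc_subset_Icc_right ht.2
  have continuousOn_dist_comp : ContinuousOn (fun z => dist (f z (ξ z)) (f z (η z))) (Icc a b) :=
    continuous_dist.comp_continuousOn
      ((continuousOn_comp_of_mem_curvesIn hf hξ).prodMk (continuousOn_comp_of_mem_curvesIn hf hη))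
  have continuousOn_dist : ContinuousOn (fun z => dist (ξ z) (η z)) (Icc a b) :=
    continuous_dist.comp_continuousOn (hξ.1.prodMk hη.1)
  rw [← intervalIntegral.integral_const_mul]
  exact intervalIntegral.integral_mono_on ht.1
    (intervalIntegrable_left_of_continuousOn_Icc continuousOn_dist_comp ht)
    (intervalIntegrable_left_of_continuousOn_Icc (continuousOn_dist.const_mul L) ht)
    fun z hz => hlip z (hat hz) _ (hξ.2 (hat hz)) _ (hη.2 (hat hz))

variable {E : Type*} [MetricSpace E] {S : Set E}

lemma eqOn_of_dist_le_integral_dist {f g ξ η : ℝ → E}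
    (hfg : ∀ t ∈ Icc a b, dist (f t) (g t) ≤ L * ∫ s in a..t, dist (ξ s) (η s))
    (hξη : EqOn ξ η (Icc a b)) : EqOn f g (Icc a b) := by
  intro t ht
  have integral_eq_zero : ∫ s in a..t, dist (ξ s) (η s) = 0 := by
    refine intervalIntegral.integral_zero_ae (.of_forall fun s hs => ?_)
    rw [uIoc_of_le ht.1] at hs
    exact dist_eq_zero.2 (hξη ⟨hs.1.le, hs.2.trans ht.2⟩)
  simpa only [integral_eq_zero, mul_zero, dist_le_zero] using hfg t ht

theorem exists_eqOn_self_unique_of_volterra (hab : a ≤ b) (hS : IsComplete S) (hne : S.Nonempty)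
    (hL : 0 ≤ L) {F : (ℝ → E) → ℝ → E}
    (hmaps : MapsTo F (curvesIn a b S) (curvesIn a b S))
    (hF : ∀ ξ ∈ curvesIn a b S, ∀ η ∈ curvesIn a b S, ∀ t ∈ Icc a b,
      dist (F ξ t) (F η t) ≤ L * ∫ s in a..t, dist (ξ s) (η s)) :
    ∃ ξ ∈ curvesIn a b S, EqOn ξ (F ξ) (Icc a b) ∧
      ∀ η ∈ curvesIn a b S, EqOn η (F η) (Icc a b) → EqOn η ξ (Icc a b) := by
  have := hS.completeSpace_coe
  have := hne.to_subtype
  let T : C(Icc a b, S) → C(Icc a b, S) := fun u =>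
    restrictCurve (hmaps (extendCurve_mem_curvesIn hab u))
  have hT : IsVolterraLipschitz hab L T := fun u v t =>
    hF _ (extendCurve_mem_curvesIn hab u) _ (extendCurve_mem_curvesIn hab v) t t.2
  obtain ⟨u, hu, hu_unique⟩ := hT.existsUnique_isFixedPt hL
  refine ⟨extendCurve hab u, extendCurve_mem_curvesIn hab u, ?_, fun η hη hη_fixed => ?_⟩
  · have hTu : EqOn (extendCurve hab (T u)) (F (extendCurve hab u)) (Icc a b) :=
      eqOn_extendCurve_restrictCurve hab (hmaps (extendCurve_mem_curvesIn hab u))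
    rwa [hu] at hTu
  · have hFη : EqOn (F (extendCurve hab (restrictCurve hη))) (F η) (Icc a b) :=
      eqOn_of_dist_le_integral_dist (hF _ (extendCurve_mem_curvesIn hab _) _ hη)
        (eqOn_extendCurve_restrictCurve hab hη)
    have restrict_fixed : IsFixedPt T (restrictCurve hη) := by
      ext t
      exact (hFη t.2).trans (hη_fixed t.2).symm
    rw [← hu_unique _ restrict_fixed]
    exact (eqOn_extendCurve_restrictCurve hab hη).symm

end VolterraFixedPoint

section LoadingMap

open Set

variable {φ : ℝ → ℝ → ℝ} {a b t ξ₀ K M : ℝ} {ξ η : ℝ → ℝ}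

lemma abs_exp_neg_sub_exp_neg_le {x y : ℝ} (hx : 0 ≤ x) (hy : 0 ≤ y) :
    |Real.exp (-x) - Real.exp (-y)| ≤ |x - y| := by
  have norm_deriv_exp_le : ∀ z ∈ Iic (0 : ℝ), ‖deriv Real.exp z‖ ≤ 1 := fun z hz => by
    rw [Real.deriv_exp, Real.norm_eq_abs, Real.abs_exp]
    exact Real.exp_le_one_iff.2 hz
  have := (convex_Iic (0 : ℝ)).norm_image_sub_le_of_norm_deriv_le
    (fun z _ => Real.differentiableAt_exp) norm_deriv_exp_le
    (mem_Iic.2 (neg_nonpos.2 hy)) (mem_Iic.2 (neg_nonpos.2 hx))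
  rwa [one_mul, neg_sub_neg, Real.norm_eq_abs, Real.norm_eq_abs, abs_sub_comm y x] at this

/-- The operator whose fixed points are the risk-loading schedules: the integral form of
the equation `(log (1 + ξ))' = -φ(θ, ξ)` with initial value `ξ a = ξ₀`. -/
noncomputable def loadingMap (φ : ℝ → ℝ → ℝ) (a ξ₀ : ℝ) (ξ : ℝ → ℝ) (t : ℝ) : ℝ :=
  (1 + ξ₀) * Real.exp (-(∫ z in a..t, φ z (ξ z))) - 1

lemma loadingMap_left (φ : ℝ → ℝ → ℝ) (a ξ₀ : ℝ) (ξ : ℝ → ℝ) : loadingMap φ a ξ₀ ξ a = ξ₀ := by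
  simp [loadingMap]

lemma continuousOn_loadingMap (ξ₀ : ℝ) (hφξ : ContinuousOn (fun z => φ z (ξ z)) (Icc a b)) :
    ContinuousOn (loadingMap φ a ξ₀ ξ) (Icc a b) := by
  rcases lt_or_ge b a with hba | hab
  · simp [Icc_eq_empty hba.not_ge]
  have continuousOn_integral : ContinuousOn (fun t => ∫ z in a..t, φ z (ξ z)) (Icc a b) := by
    rw [← uIcc_of_le hab] at hφξ ⊢
    exact intervalIntegral.continuousOn_primitive_interval (hφξ.integrableOn_compact isCompact_uIcc)
  unfold loadingMap
  fun_prop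

lemma loadingMap_mem_Icc (hφξ : ContinuousOn (fun z => φ z (ξ z)) (Icc a b))
    (hbd : ∀ z ∈ Icc a b, φ z (ξ z) ∈ Icc 0 K)
    (hgrow : 1 ≤ (1 + ξ₀) * Real.exp (-(K * (b - a)))) (ht : t ∈ Icc a b) :
    loadingMap φ a ξ₀ ξ t ∈ Icc 0 ξ₀ := by
  have hbd_left : ∀ z ∈ Icc a t, φ z (ξ z) ∈ Icc 0 K := fun z hz => hbd z ⟨hz.1, hz.2.trans ht.2⟩
  have hK : 0 ≤ K := (hbd t ht).1.trans (hbd t ht).2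
  have hξ₀ : 0 < 1 + ξ₀ := pos_of_mul_pos_left (one_pos.trans_le hgrow) (Real.exp_pos _).le
  have integral_nonneg : 0 ≤ ∫ z in a..t, φ z (ξ z) :=
    intervalIntegral.integral_nonneg ht.1 fun z hz => (hbd_left z hz).1
  have integral_le : ∫ z in a..t, φ z (ξ z) ≤ K * (b - a) := calc
    _ ≤ ∫ _ in a..t, K := intervalIntegral.integral_mono_on ht.1
      (intervalIntegrable_left_of_continuousOn_Icc hφξ ht) intervalIntegrable_const
      fun z hz => (hbd_left z hz).2
    _ = K * (t - a) := by rw [intervalIntegral.integral_const, smul_eq_mul, mul_comm]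
    _ ≤ K * (b - a) := by gcongr; exact ht.2
  constructor
  · refine sub_nonneg.2 (hgrow.trans ?_)
    gcongr
  · have := mul_le_of_le_one_right hξ₀.le (Real.exp_le_one_iff.2 (neg_nonpos.2 integral_nonneg))
    rw [loadingMap]
    linarith

lemma abs_loadingMap_sub_le (hξ₀ : 0 ≤ 1 + ξ₀)
    (hφξ : ContinuousOn (fun z => φ z (ξ z)) (Icc a b))
    (hφη : ContinuousOn (fun z => φ z (η z)) (Icc a b))
    (hφξ_nonneg : ∀ z ∈ Icc a b, 0 ≤ φ z (ξ z)) (hφη_nonneg : ∀ z ∈ Icc a b, 0 ≤ φ z (η z))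
    (ht : t ∈ Icc a b) :
    |loadingMap φ a ξ₀ ξ t - loadingMap φ a ξ₀ η t| ≤
      (1 + ξ₀) * ∫ z in a..t, |φ z (ξ z) - φ z (η z)| := by
  have hat : Icc a t ⊆ Icc a b := Icc_subset_Icc_right ht.2
  calc |loadingMap φ a ξ₀ ξ t - loadingMap φ a ξ₀ η t|
    _ = (1 + ξ₀) * |Real.exp (-(∫ z in a..t, φ z (ξ z))) -
          Real.exp (-(∫ z in a..t, φ z (η z)))| := by
      rw [loadingMap, loadingMap, sub_sub_sub_cancel_right, ← mul_sub, abs_mul, abs_of_nonneg hξ₀]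
    _ ≤ (1 + ξ₀) * |(∫ z in a..t, φ z (ξ z)) - ∫ z in a..t, φ z (η z)| := by
      refine mul_le_mul_of_nonneg_left (abs_exp_neg_sub_exp_neg_le ?_ ?_) hξ₀
      · exact intervalIntegral.integral_nonneg ht.1 fun z hz => hφξ_nonneg z (hat hz)
      · exact intervalIntegral.integral_nonneg ht.1 fun z hz => hφη_nonneg z (hat hz)
    _ = (1 + ξ₀) * |∫ z in a..t, (φ z (ξ z) - φ z (η z))| := by
      rw [intervalIntegral.integral_sub (intervalIntegrable_left_of_continuousOn_Icc hφξ ht)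
        (intervalIntegrable_left_of_continuousOn_Icc hφη ht)]
    _ ≤ (1 + ξ₀) * ∫ z in a..t, |φ z (ξ z) - φ z (η z)| := by
      gcongr
      exact intervalIntegral.abs_integral_le_integral_abs ht.1

lemma mapsTo_loadingMap_curvesIn
    (hφcont : ContinuousOn (fun p : ℝ × ℝ => φ p.1 p.2) (Icc a b ×ˢ Icc 0 ξ₀))
    (hφbd : ∀ z ∈ Icc a b, ∀ x ∈ Icc 0 ξ₀, φ z x ∈ Icc 0 K)
    (hgrow : 1 ≤ (1 + ξ₀) * Real.exp (-(K * (b - a)))) :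
    MapsTo (loadingMap φ a ξ₀) (curvesIn a b (Icc 0 ξ₀)) (curvesIn a b (Icc 0 ξ₀)) := by
  intro ξ hξ
  have hφξ := continuousOn_comp_of_mem_curvesIn hφcont hξ
  exact ⟨continuousOn_loadingMap ξ₀ hφξ, fun t ht =>
    loadingMap_mem_Icc hφξ (fun z hz => hφbd z hz _ (hξ.2 hz)) hgrow ht⟩

lemma dist_loadingMap_le {S : Set ℝ} (hξ₀ : 0 ≤ 1 + ξ₀)
    (hφcont : ContinuousOn (fun p : ℝ × ℝ => φ p.1 p.2) (Icc a b ×ˢ S))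
    (hφ_nonneg : ∀ z ∈ Icc a b, ∀ x ∈ S, 0 ≤ φ z x)
    (hφlip : ∀ z ∈ Icc a b, ∀ x ∈ S, ∀ y ∈ S, |φ z x - φ z y| ≤ M * |x - y|)
    (hξ : ξ ∈ curvesIn a b S) (hη : η ∈ curvesIn a b S) (ht : t ∈ Icc a b) :
    dist (loadingMap φ a ξ₀ ξ t) (loadingMap φ a ξ₀ η t) ≤
      (1 + ξ₀) * M * ∫ z in a..t, dist (ξ z) (η z) :=
  calc dist (loadingMap φ a ξ₀ ξ t) (loadingMap φ a ξ₀ η t)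
    _ ≤ (1 + ξ₀) * ∫ z in a..t, dist (φ z (ξ z)) (φ z (η z)) :=
      abs_loadingMap_sub_le hξ₀ (continuousOn_comp_of_mem_curvesIn hφcont hξ)
        (continuousOn_comp_of_mem_curvesIn hφcont hη) (fun z hz => hφ_nonneg z hz _ (hξ.2 hz))
        (fun z hz => hφ_nonneg z hz _ (hη.2 hz)) ht
    _ ≤ (1 + ξ₀) * (M * ∫ z in a..t, dist (ξ z) (η z)) :=
      mul_le_mul_of_nonneg_left (integral_dist_comp_le hφcont hφlip hξ hη ht) hξ₀
    _ = (1 + ξ₀) * M * ∫ z in a..t, dist (ξ z) (η z) := (mul_assoc _ _ _).symm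

theorem fixed_point_exists_unique_general (hab : a ≤ b) (hξ₀ : 0 ≤ ξ₀) (hM : 0 ≤ M)
    (hφcont : ContinuousOn (fun p : ℝ × ℝ => φ p.1 p.2) (Icc a b ×ˢ Icc 0 ξ₀))
    (hφbd : ∀ θ ∈ Icc a b, ∀ x ∈ Icc 0 ξ₀, 0 ≤ φ θ x ∧ φ θ x ≤ K)
    (hφlip : ∀ θ ∈ Icc a b, ∀ x₁ ∈ Icc 0 ξ₀, ∀ x₂ ∈ Icc 0 ξ₀,
      |φ θ x₁ - φ θ x₂| ≤ M * |x₁ - x₂|)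
    (hgrow : 1 ≤ (1 + ξ₀) * Real.exp (-(K * (b - a)))) :
    ∃ ξ : ℝ → ℝ,
      (ContinuousOn ξ (Icc a b) ∧ ξ a = ξ₀ ∧ (∀ θ ∈ Icc a b, 0 ≤ ξ θ ∧ ξ θ ≤ ξ₀) ∧
        (∀ θ ∈ Icc a b, ξ θ = (1 + ξ₀) * Real.exp (-(∫ z in a..θ, φ z (ξ z))) - 1)) ∧
      ∀ ξ' : ℝ → ℝ,
        (ContinuousOn ξ' (Icc a b) ∧ ξ' a = ξ₀ ∧ (∀ θ ∈ Icc a b, 0 ≤ ξ' θ ∧ ξ' θ ≤ ξ₀) ∧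
          (∀ θ ∈ Icc a b, ξ' θ = (1 + ξ₀) * Real.exp (-(∫ z in a..θ, φ z (ξ' z))) - 1)) →
        EqOn ξ' ξ (Icc a b) := by
  obtain ⟨ξ, hξ, hξ_fixed, hξ_unique⟩ := exists_eqOn_self_unique_of_volterra hab
    isClosed_Icc.isComplete (nonempty_Icc.2 hξ₀) (by positivity)
    (mapsTo_loadingMap_curvesIn hφcont hφbd hgrow) fun ξ hξ η hη t ht =>
      dist_loadingMap_le (by positivity) hφcont (fun z hz x hx => (hφbd z hz x hx).1) hφlip hξ hη ht
  have hξ_left : ξ a = ξ₀ := (hξ_fixed (left_mem_Icc.2 hab)).trans (loadingMap_left φ a ξ₀ ξ)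
  exact ⟨ξ, ⟨hξ.1, hξ_left, hξ.2, hξ_fixed⟩,
    fun η ⟨hη_cont, _, hη_mem, hη_fixed⟩ => hξ_unique η ⟨hη_cont, hη_mem⟩ hη_fixed⟩

end LoadingMap

/-- existence–uniqueness conclusion of Lemma 4.5 (Banach fixed point).
Under the stated bounds on φ and the conditions (1 + ξ₀)·M·(θ_H − θ_L) < 1 and
(1 + ξ₀)·e^{−K(θ_H − θ_L)} ≥ 1, there is a unique continuous function
ξ : [θ_L, θ_H] → ℝ with ξ(θ_L) = ξ₀ and 0 ≤ ξ ≤ ξ₀ satisfying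
ξ(θ) = (1 + ξ₀)·exp(−∫_{θ_L}^θ φ(z, ξ(z)) dz) − 1 on [θ_L, θ_H]. -/
theorem fixed_point_exists_unique
    (θL θH ξ₀ K M : ℝ) (hθ : θL < θH) (hξ₀ : 0 < ξ₀) (hK : 0 < K) (hM : 0 < M)
    (φ : ℝ → ℝ → ℝ)
    (hφcont : ContinuousOn (fun p : ℝ × ℝ => φ p.1 p.2)
      (Set.Icc θL θH ×ˢ (Set.univ : Set ℝ)))
    (hφbd : ∀ θ ∈ Set.Icc θL θH, ∀ x ∈ Set.Icc (0 : ℝ) ξ₀,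
      0 ≤ φ θ x ∧ φ θ x ≤ K)
    (hφlip : ∀ θ ∈ Set.Icc θL θH, ∀ x₁ ∈ Set.Icc (0 : ℝ) ξ₀,
      ∀ x₂ ∈ Set.Icc (0 : ℝ) ξ₀, |φ θ x₁ - φ θ x₂| ≤ M * |x₁ - x₂|)
    (hcontr : (1 + ξ₀) * M * (θH - θL) < 1)
    (hgrow : 1 ≤ (1 + ξ₀) * Real.exp (-(K * (θH - θL)))) :
    ∃ ξ : ℝ → ℝ,
      (ContinuousOn ξ (Set.Icc θL θH) ∧ ξ θL = ξ₀ ∧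
        (∀ θ ∈ Set.Icc θL θH, 0 ≤ ξ θ ∧ ξ θ ≤ ξ₀) ∧
        (∀ θ ∈ Set.Icc θL θH,
          ξ θ = (1 + ξ₀) * Real.exp (-(∫ z in θL..θ, φ z (ξ z))) - 1)) ∧
      ∀ ξ' : ℝ → ℝ,
        (ContinuousOn ξ' (Set.Icc θL θH) ∧ ξ' θL = ξ₀ ∧
          (∀ θ ∈ Set.Icc θL θH, 0 ≤ ξ' θ ∧ ξ' θ ≤ ξ₀) ∧
          (∀ θ ∈ Set.Icc θL θH,
            ξ' θ = (1 + ξ₀) * Real.exp (-(∫ z in θL..θ, φ z (ξ' z))) - 1)) →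
        Set.EqOn ξ' ξ (Set.Icc θL θH) :=
  fixed_point_exists_unique_general hθ.le hξ₀.le hM.le
    (hφcont.mono (Set.prod_mono_right (Set.subset_univ _))) hφbd hφlip hgrow
end

section
/- Let θ_L < θ_H be real numbers. Let F : [0, ∞) × [θ_L, θ_H] → ℝ be such that for each θ, y ↦ F(y; θ) is a continuous nondecreasing function with 0 ≤ F(y; θ) ≤ 1 and ∫_0^∞ (1 − F(y; θ)) dy < ∞; assume that for each y the map θ ↦ F(y; θ) is continuously differentiable with ∂_θF(y; θ) < 0 for all y > 0, that there is an integrable function g on [0, ∞) with |∂_θF(y; θ)| ≤ g(y) for all θ, and that ∂_θF is jointly continuous. Let γ : [θ_L, θ_H] → (0, ∞) be continuously differentiable with γ'(θ) ≥ 0, and let ξ : [θ_L, θ_H] → [0, ∞) be continuously differentiable with ξ'(θ) < 0 for all θ. Define Ψ(θ, x) := ∫_{x/γ(θ)}^∞ (1 − F(y; θ)) dy and Ψ_θ(θ, x) := −∫_{x/γ(θ)}^∞ ∂_θF(y; θ) dy, and assume the truth-telling ODE ξ'(θ)·Ψ(θ, ξ(θ)) + (1 + ξ(θ))·Ψ_θ(θ,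 ξ(θ)) = 0 holds for all θ, and that 1 − F(ξ(θ)/γ(θ); θ) > 0 for all θ. Then the premium map p(θ) := (1 + ξ(θ))·Ψ(θ, ξ(θ)) is strictly increasing on [θ_L, θ_H]. -/
open MeasureTheory

/-!
With the deductible `d = ξ / γ`, the Leibniz rule gives
`d/dθ Ψ(θ, ξ(θ)) = Ψ_θ(θ, ξ(θ)) - d'(θ) (1 - F(d(θ); θ))`. Hence the truth-telling equation cancels
everything in `p'` except `-(1 + ξ) d' (1 - F(d; θ))`, which is positive because `d' < 0`.

For the Leibniz rule, `∫_{d(θ)}^∞ f_θ = ∫_{d(θ)}^∞ (f_θ - f_θ₀) + ∫_{d(θ)}^∞ f_θ₀`. Dominated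
convergence differentiates the first term at `θ₀`, and the fundamental theorem of calculus the
second. Derivatives are taken within the type set, which makes `p` continuous at its endpoints too.
-/

open Set Filter Topology

section LeibnizRule

variable {E : Type*} [NormedAddCommGroup E] [NormedSpace ℝ E]

theorem hasDerivWithinAt_setIntegral_sub_of_dominated {α : Type*} [MeasurableSpace α]
    {μ : Measure α} {A : ℝ → Set α} {f : ℝ → α → E} {f' : α → E} {g : α → ℝ} {s : Set ℝ} {t₀ : ℝ}
    (ht₀ : t₀ ∈ s) (hA : ∀ t ∈ s, MeasurableSet (A t))
    (hA_lim : ∀ᵐ y ∂μ, ∀ᶠ t in 𝓝[s] t₀, y ∈ A t ↔ y ∈ A t₀)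
    (hf_meas : ∀ t ∈ s, AEStronglyMeasurable (f t) μ)
    (h_lip : ∀ t ∈ s, ∀ᵐ y ∂μ, ‖f t y - f t₀ y‖ ≤ g y * ‖t - t₀‖)
    (hg : Integrable g μ)
    (h_deriv : ∀ᵐ y ∂μ, HasDerivWithinAt (fun t => f t y) (f' y) s t₀) :
    HasDerivWithinAt (fun t => ∫ y in A t, (f t y - f t₀ y) ∂μ) (∫ y in A t₀, f' y ∂μ) s t₀ := by
  rw [hasDerivWithinAt_iff_tendsto_slope, ← integral_indicator (hA t₀ ht₀)]
  have slope_eq : ∀ t ∈ s, ∫ y, (A t).indicator (fun y => slope (fun t => f t y) t₀ t) y ∂μ =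
      slope (fun t => ∫ y in A t, (f t y - f t₀ y) ∂μ) t₀ t := fun t ht => by
    simp only [slope_def_module, sub_self, integral_zero, sub_zero, integral_indicator (hA t ht),
      integral_smul]
  have hs : ∀ᶠ t in 𝓝[s \ {t₀}] t₀, t ∈ s \ {t₀} := self_mem_nhdsWithin
  refine Tendsto.congr' (hs.mono fun t ht => slope_eq t ht.1)
    (tendsto_integral_filter_of_dominated_convergence g ?meas ?bound hg ?lim)
  case meas =>
    filter_upwards [hs] with t ht
    simp only [slope_def_module]
    exact (((hf_meas t ht.1).sub (hf_meas t₀ ht₀)).const_smul _).indicator (hA t ht.1)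
  case bound =>
    filter_upwards [hs] with t ht
    filter_upwards [h_lip t ht.1] with y hy
    have ht_pos : 0 < ‖t - t₀‖ := norm_pos_iff.2 (sub_ne_zero.2 ht.2)
    refine (norm_indicator_le_norm_self _ _).trans ?_
    rwa [slope_def_module, norm_smul, norm_inv, inv_mul_le_iff₀' ht_pos]
  case lim =>
    filter_upwards [hA_lim, h_deriv] with y hyA hy
    have indicator_eq : ∀ᶠ t in 𝓝[s \ {t₀}] t₀,
        (A t₀).indicator (fun y => slope (fun t => f t y) t₀ t) y =
          (A t).indicator (fun y => slope (fun t => f t y) t₀ t) y := by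
      filter_upwards [hyA.filter_mono (nhdsWithin_mono _ sdiff_subset)] with t ht
      by_cases hy₀ : y ∈ A t₀ <;> simp [hy₀, ht]
    refine Tendsto.congr' indicator_eq ?_
    by_cases hy₀ : y ∈ A t₀
    · simpa only [indicator_of_mem hy₀] using hasDerivWithinAt_iff_tendsto_slope.1 hy
    · simpa only [indicator_of_notMem hy₀] using tendsto_const_nhds

theorem ae_eventually_mem_Ioi_iff {X : Type*} [TopologicalSpace X] {μ : Measure ℝ}
    [NullSingletonClass μ] {d : X → ℝ} {s : Set X} {t₀ : X} (hd : ContinuousWithinAt d s t₀) :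
    ∀ᵐ y ∂μ, ∀ᶠ t in 𝓝[s] t₀, y ∈ Ioi (d t) ↔ y ∈ Ioi (d t₀) := by
  filter_upwards [Measure.ae_ne μ (d t₀)] with y hy
  rcases hy.lt_or_gt with hlt | hgt
  · filter_upwards [hd.eventually (lt_mem_nhds hlt)] with t ht
    exact iff_of_false ht.not_gt hlt.not_gt
  · filter_upwards [hd.eventually (gt_mem_nhds hgt)] with t ht
    exact iff_of_true ht hgt

theorem hasDerivWithinAt_integral_Ioi_left [CompleteSpace E] {h : ℝ → E} {a x : ℝ} (hx : a ≤ x)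
    (h_int : IntegrableOn h (Ioi a)) (h_cont : ContinuousWithinAt h (Ici a) x) :
    HasDerivWithinAt (fun u => ∫ y in Ioi u, h y) (-h x) (Ici a) x := by
  have : Fact (x ∈ Icc a (x + 1)) := ⟨hx, by linarith⟩
  have h_meas : StronglyMeasurableAtFilter h (𝓝[Icc a (x + 1)] x) :=
    ⟨Icc a (x + 1), self_mem_nhdsWithin,
      (integrableOn_Ici_iff_integrableOn_Ioi (by simp) |>.2 h_int).aestronglyMeasurable.mono_set
        Icc_subset_Ici_self⟩
  have ftc : HasDerivWithinAt (fun u => ∫ y in u..x, h y) (-h x) (Icc a (x + 1)) x :=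
    intervalIntegral.integral_hasDerivWithinAt_left .refl h_meas
      (h_cont.mono Icc_subset_Ici_self)
  rw [← Ici_inter_Iic, hasDerivWithinAt_inter (Iic_mem_nhds (lt_add_one x))] at ftc
  have tail (u : ℝ) (hu : a ≤ u) : IntegrableOn h (Ioi u) := h_int.mono_set (Ioi_subset_Ioi hu)
  exact (ftc.add_const (∫ y in Ioi x, h y)).congr_of_mem
    (fun u hu => (intervalIntegral.integral_interval_add_Ioi (tail u hu) (tail x hx)).symm) hx

theorem hasDerivWithinAt_integral_Ioi_of_dominated [CompleteSpace E]
    {f f' : ℝ → ℝ → E} {g d : ℝ → ℝ} {s : Set ℝ} {a d' t₀ : ℝ} (hs : Convex ℝ s) (ht₀ : t₀ ∈ s)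
    (hf_int : ∀ t ∈ s, IntegrableOn (f t) (Ioi a))
    (hf_cont : ContinuousWithinAt (f t₀) (Ici a) (d t₀))
    (hf_deriv : ∀ y > a, ∀ t ∈ s, HasDerivWithinAt (fun t => f t y) (f' t y) s t)
    (hf'_le : ∀ y > a, ∀ t ∈ s, ‖f' t y‖ ≤ g y) (hg : IntegrableOn g (Ioi a))
    (hd_mem : MapsTo d s (Ici a)) (hd : HasDerivWithinAt d d' s t₀) :
    HasDerivWithinAt (fun t => ∫ y in Ioi (d t), f t y)
      ((∫ y in Ioi (d t₀), f' t₀ y) - d' • f t₀ (d t₀)) s t₀ := by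
  have vary_integrand : HasDerivWithinAt (fun t => ∫ y in Ioi (d t), (f t y - f t₀ y))
      (∫ y in Ioi (d t₀), f' t₀ y) s t₀ := by
    have key := hasDerivWithinAt_setIntegral_sub_of_dominated (μ := volume.restrict (Ioi a))
      (A := fun t => Ioi (d t)) ht₀ (fun _ _ => measurableSet_Ioi)
      (ae_eventually_mem_Ioi_iff hd.continuousWithinAt)
      (fun t ht => (hf_int t ht).aestronglyMeasurable)
      (fun t ht => (ae_restrict_mem measurableSet_Ioi).mono fun y hy =>
        hs.norm_image_sub_le_of_norm_hasDerivWithin_le (hf_deriv y hy) (hf'_le y hy) ht₀ ht)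
      hg ((ae_restrict_mem measurableSet_Ioi).mono fun y hy => hf_deriv y hy t₀ ht₀)
    have restrict_eq (t : ℝ) (ht : t ∈ s) :
        (volume.restrict (Ioi a)).restrict (Ioi (d t)) = volume.restrict (Ioi (d t)) :=
      Measure.restrict_restrict_of_subset (Ioi_subset_Ioi (hd_mem ht))
    rw [restrict_eq t₀ ht₀] at key
    exact key.congr_of_mem (fun t ht => by rw [restrict_eq t ht]) ht₀
  have vary_limit : HasDerivWithinAt (fun t => ∫ y in Ioi (d t), f t₀ y)
      (d' • -f t₀ (d t₀)) s t₀ :=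
    (hasDerivWithinAt_integral_Ioi_left (hd_mem ht₀) (hf_int t₀ ht₀) hf_cont).scomp t₀ hd hd_mem
  have tail {r t : ℝ} (hr : r ∈ s) (ht : t ∈ s) : IntegrableOn (f r) (Ioi (d t)) :=
    (hf_int r hr).mono_set (Ioi_subset_Ioi (hd_mem ht))
  rw [sub_eq_add_neg, ← smul_neg]
  refine (vary_integrand.add vary_limit).congr_of_mem (fun t ht => ?_) ht₀
  simp only [Pi.add_apply, integral_sub (tail ht ht) (tail ht₀ ht), sub_add_cancel]

end LeibnizRule

theorem premium_strictly_increasing_general {Θ : Set ℝ} (hΘ : Convex ℝ Θ)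
    {F Fθ : ℝ → ℝ → ℝ} {g γ γ' ξ ξ' : ℝ → ℝ} {Ψ Ψθ : ℝ → ℝ → ℝ}
    (hFcont : ∀ θ ∈ Θ, ContinuousWithinAt (fun y => F y θ) (Ici 0) (ξ θ / γ θ))
    (hFint : ∀ θ ∈ Θ, IntegrableOn (fun y => 1 - F y θ) (Ioi 0))
    (hFθderiv : ∀ y > 0, ∀ θ ∈ Θ, HasDerivWithinAt (fun t => F y t) (Fθ y θ) Θ θ)
    (hg_int : IntegrableOn g (Ioi 0))
    (hg_dom : ∀ y > 0, ∀ θ ∈ Θ, |Fθ y θ| ≤ g y)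
    (hγpos : ∀ θ ∈ Θ, 0 < γ θ)
    (hγderiv : ∀ θ ∈ Θ, HasDerivWithinAt γ (γ' θ) Θ θ)
    (hγ'nonneg : ∀ θ ∈ Θ, 0 ≤ γ' θ)
    (hξnonneg : ∀ θ ∈ Θ, 0 ≤ ξ θ)
    (hξderiv : ∀ θ ∈ Θ, HasDerivWithinAt ξ (ξ' θ) Θ θ)
    (hξ'neg : ∀ θ ∈ Θ, ξ' θ < 0)
    (hΨ : ∀ θ x : ℝ, Ψ θ x = ∫ y in Ioi (x / γ θ), (1 - F y θ))
    (hΨθ : ∀ θ x : ℝ, Ψθ θ x = -∫ y in Ioi (x / γ θ), Fθ y θ)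
    (hODE : ∀ θ ∈ Θ, ξ' θ * Ψ θ (ξ θ) + (1 + ξ θ) * Ψθ θ (ξ θ) = 0)
    (hsurv : ∀ θ ∈ Θ, 0 < 1 - F (ξ θ / γ θ) θ) :
    StrictMonoOn (fun θ => (1 + ξ θ) * Ψ θ (ξ θ)) Θ := by
  let d' θ := (ξ' θ * γ θ - ξ θ * γ' θ) / γ θ ^ 2
  have deductible_deriv (θ) (hθ : θ ∈ Θ) : HasDerivWithinAt (fun t => ξ t / γ t) (d' θ) Θ θ :=
    (hξderiv θ hθ).fun_div (hγderiv θ hθ) (hγpos θ hθ).ne'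
  have deductible_deriv_neg (θ) (hθ : θ ∈ Θ) : d' θ < 0 :=
    div_neg_of_neg_of_pos (sub_neg_of_lt <|
      (mul_neg_of_neg_of_pos (hξ'neg θ hθ) (hγpos θ hθ)).trans_le
        (mul_nonneg (hξnonneg θ hθ) (hγ'nonneg θ hθ))) (pow_pos (hγpos θ hθ) 2)
  have excess_deriv (θ) (hθ : θ ∈ Θ) : HasDerivWithinAt (fun t => Ψ t (ξ t))
      (Ψθ θ (ξ θ) - d' θ * (1 - F (ξ θ / γ θ) θ)) Θ θ := by
    simp only [hΨ, hΨθ, ← integral_neg]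
    exact hasDerivWithinAt_integral_Ioi_of_dominated (f' := fun t y => -Fθ y t) hΘ hθ hFint
      (continuousWithinAt_const.sub (hFcont θ hθ))
      (fun y hy t ht => (hFθderiv y hy t ht).const_sub 1)
      (fun y hy t ht => (norm_neg _).trans_le (hg_dom y hy t ht)) hg_int
      (fun t ht => div_nonneg (hξnonneg t ht) (hγpos t ht).le) (deductible_deriv θ hθ)
  have premium_deriv (θ) (hθ : θ ∈ Θ) : HasDerivWithinAt (fun θ => (1 + ξ θ) * Ψ θ (ξ θ))
      ((1 + ξ θ) * (-d' θ * (1 - F (ξ θ / γ θ) θ))) Θ θ :=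
    (((hξderiv θ hθ).const_add 1).fun_mul (excess_deriv θ hθ)).congr_deriv
      (by linear_combination hODE θ hθ)
  refine strictMonoOn_of_hasDerivWithinAt_pos hΘ
    (fun θ hθ => (premium_deriv θ hθ).continuousWithinAt)
    (fun θ hθ => (premium_deriv θ (interior_subset hθ)).mono interior_subset) fun θ hθ => ?_
  have hθ := interior_subset hθ
  exact mul_pos (by linarith [hξnonneg θ hθ])
    (mul_pos (neg_pos.2 (deductible_deriv_neg θ hθ)) (hsurv θ hθ))

/-- Proposition 4.8(3): under risk-type uncertainty, with claim-size
CDFs F(·; θ) satisfying ∂_θF < 0 with dominated, jointly continuous θ-derivative,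
a nondecreasing continuously differentiable risk-aversion γ(θ) > 0, and a strictly
decreasing continuously differentiable loading schedule ξ(θ) ≥ 0 satisfying the
truth-telling ODE ξ'(θ)·Ψ(θ, ξ(θ)) + (1 + ξ(θ))·Ψ_θ(θ, ξ(θ)) = 0 with
1 − F(ξ(θ)/γ(θ); θ) > 0, the premium p(θ) = (1 + ξ(θ))·Ψ(θ, ξ(θ)) is strictly
increasing on [θ_L, θ_H]. Here F y θ denotes F(y; θ) and Fθ y θ denotes ∂_θF(y; θ). -/
theorem premium_strictly_increasing
    (θL θH : ℝ) (hθ : θL < θH)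
    (F : ℝ → ℝ → ℝ)
    (hFcont : ∀ θ ∈ Set.Icc θL θH, ContinuousOn (fun y => F y θ) (Set.Ici 0))
    (hFmono : ∀ θ ∈ Set.Icc θL θH, MonotoneOn (fun y => F y θ) (Set.Ici 0))
    (hFrange : ∀ θ ∈ Set.Icc θL θH, ∀ y : ℝ, 0 ≤ y → F y θ ∈ Set.Icc (0 : ℝ) 1)
    (hFint : ∀ θ ∈ Set.Icc θL θH,
      IntegrableOn (fun y => 1 - F y θ) (Set.Ioi 0))
    (Fθ : ℝ → ℝ → ℝ)
    (hFθderiv : ∀ y : ℝ, 0 ≤ y → ∀ θ ∈ Set.Icc θL θH,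
      HasDerivAt (fun t => F y t) (Fθ y θ) θ)
    (hFθneg : ∀ y : ℝ, 0 < y → ∀ θ ∈ Set.Icc θL θH, Fθ y θ < 0)
    (g : ℝ → ℝ)
    (hg_int : IntegrableOn g (Set.Ioi 0))
    (hg_dom : ∀ y : ℝ, 0 ≤ y → ∀ θ ∈ Set.Icc θL θH, |Fθ y θ| ≤ g y)
    (hFθjc : ContinuousOn (fun p : ℝ × ℝ => Fθ p.1 p.2)
      (Set.Ici 0 ×ˢ Set.Icc θL θH))
    (γ γ' : ℝ → ℝ)
    (hγpos : ∀ θ ∈ Set.Icc θL θH, 0 < γ θ)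
    (hγderiv : ∀ θ ∈ Set.Icc θL θH, HasDerivAt γ (γ' θ) θ)
    (hγ'cont : ContinuousOn γ' (Set.Icc θL θH))
    (hγ'nonneg : ∀ θ ∈ Set.Icc θL θH, 0 ≤ γ' θ)
    (ξ ξ' : ℝ → ℝ)
    (hξnonneg : ∀ θ ∈ Set.Icc θL θH, 0 ≤ ξ θ)
    (hξderiv : ∀ θ ∈ Set.Icc θL θH, HasDerivAt ξ (ξ' θ) θ)
    (hξ'cont : ContinuousOn ξ' (Set.Icc θL θH))
    (hξ'neg : ∀ θ ∈ Set.Icc θL θH, ξ' θ < 0)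
    (Ψ Ψθ : ℝ → ℝ → ℝ)
    (hΨ : ∀ θ x : ℝ, Ψ θ x = ∫ y in Set.Ioi (x / γ θ), (1 - F y θ))
    (hΨθ : ∀ θ x : ℝ, Ψθ θ x = -∫ y in Set.Ioi (x / γ θ), Fθ y θ)
    (hODE : ∀ θ ∈ Set.Icc θL θH,
      ξ' θ * Ψ θ (ξ θ) + (1 + ξ θ) * Ψθ θ (ξ θ) = 0)
    (hsurv : ∀ θ ∈ Set.Icc θL θH, 0 < 1 - F (ξ θ / γ θ) θ) :
    StrictMonoOn (fun θ => (1 + ξ θ) * Ψ θ (ξ θ)) (Set.Icc θL θH) := by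
  exact premium_strictly_increasing_general (convex_Icc θL θH)
    (fun θ h => hFcont θ h _ (div_nonneg (hξnonneg θ h) (hγpos θ h).le)) hFint
    (fun y hy θ h => (hFθderiv y hy.le θ h).hasDerivWithinAt) hg_int
    (fun y hy => hg_dom y hy.le) hγpos (fun θ h => (hγderiv θ h).hasDerivWithinAt) hγ'nonneg
    hξnonneg (fun θ h => (hξderiv θ h).hasDerivWithinAt) hξ'neg hΨ hΨθ hODE hsurv
end

section
/- Let θ_L < θ_H be real numbers and γ > 0. Let F : [0, ∞) × [θ_L, θ_H] → ℝ be such that for each θ, y ↦ F(y; θ) is continuously differentiable with density f(y; θ) := ∂_yF(y; θ) ≥ 0, F(0; θ) = 0, 0 ≤ F(y; θ) ≤ 1, ∫_0^∞ (1 − F(y; θ)) dy < ∞, and y·(1 − F(y; θ)) → 0 as y → ∞; assume θ ↦ F(y; θ) is continuously differentiable with ∂_θF(y; θ) < 0 for all y > 0, that ∂_θF is jointly continuous, that there is a function g on [0, ∞) with |∂_θF(y; θ)| ≤ g(y) for all θ and ∫_0^∞ (1 + y)·g(y) dy < ∞, and that y·|∂_θF(y; θ)| → 0 as y → ∞ for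 each θ. Let ξ : [θ_L, θ_H] → (0, ∞) be continuously differentiable with ξ'(θ) < 0 for all θ, satisfying ξ'(θ)·Ψ(θ, ξ(θ)) + (1 + ξ(θ))·Ψ_θ(θ, ξ(θ)) = 0 for all θ, where Ψ(θ, x) := ∫_{x/γ}^∞ (1 − F(y; θ)) dy and Ψ_θ(θ, x) := −∫_{x/γ}^∞ ∂_θF(y; θ) dy. For θ, θ̃ ∈ [θ_L, θ_H] define J^θ(θ̃) := −(1 + ξ(θ̃))·∫_{ξ(θ̃)/γ}^∞ (1 − F(y; θ̃)) dy − ∫_0^{ξ(θ̃)/γ} (y + (γ/2)·y²)·f(y; θ) dy − (ξ(θ̃)/γ)·(1 + ξ(θ̃)/2)·(1 − F(ξ(θ̃)/γ; θ)). Then for every θ ∈ [θ_L, θ_H], J^θ(θ̃) ≤ J^θ(θ) for all θ̃ ∈ [θ_L, θ_H], with strict inequality whenever θ̃ ≠ θ and F(ξ(θ̃)/γ; θ) ≠ F(ξ(θ̃)/γ; θ̃) on the path; in particular θ̃ = θ maximizes J^θ over [θ_L, θ_H]. -/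
open MeasureTheory

/-!
Write `d t = ξ t / γ` for the deductible bought by reporting `t`. Integrating by parts, the cost of
the retained loss of a type-`θ` customer is `∫ y in 0..d t, (1 + γ y) (1 - F y θ)`, whose derivative
in `t` is `(1 + ξ t) (1 - F (d t) θ) ξ' t / γ`. The premium depends on the report alone, and by the
Leibniz rule and the truth-telling equation its derivative is `-(1 + ξ t) (1 - F (d t) t) ξ' t / γ`.
Hence the utility has derivative `(ξ' t / γ) (1 + ξ t) (F (d t) θ - F (d t) t)`, which is positive
for `t < θ` and negative for `t > θ`, because `ξ` and `F y` are decreasing.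
-/

section

open Set Filter Topology

theorem integrable_of_integrable_mul_of_one_le {α : Type*} [MeasurableSpace α] {μ : Measure α}
    {w g : α → ℝ} (hw : AEStronglyMeasurable w μ) (hw_one : ∀ᵐ a ∂μ, 1 ≤ w a)
    (hwg : Integrable (fun a => w a * g a) μ) : Integrable g μ := by
  have hbound : ∀ᵐ a ∂μ, ‖(w a)⁻¹‖ ≤ 1 := by
    filter_upwards [hw_one] with a ha
    rw [norm_inv]
    exact inv_le_one_of_one_le₀ (ha.trans (le_abs_self _))
  refine (hwg.bdd_mul hw.aemeasurable.inv.aestronglyMeasurable hbound).congr ?_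
  filter_upwards [hw_one] with a ha
  exact inv_mul_cancel_left₀ (zero_lt_one.trans_le ha).ne' (g a)

theorem hasDerivWithinAt_integral_of_dominated_of_lip {𝕜 α E : Type*} [RCLike 𝕜]
    [MeasurableSpace α] [NormedAddCommGroup E] [NormedSpace ℝ E] [NormedSpace 𝕜 E]
    {μ : Measure α} {h : 𝕜 → α → E} {h' : α → E} {bound : α → ℝ} {s : Set 𝕜} {t₀ : 𝕜}
    (ht₀ : t₀ ∈ s) (h_int : ∀ t ∈ s, Integrable (h t) μ)
    (h_lip : ∀ t ∈ s, ∀ᵐ a ∂μ, ‖h t a - h t₀ a‖ ≤ bound a * ‖t - t₀‖)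
    (bound_int : Integrable bound μ)
    (h_deriv : ∀ᵐ a ∂μ, HasDerivWithinAt (fun t => h t a) (h' a) s t₀) :
    HasDerivWithinAt (fun t => ∫ a, h t a ∂μ) (∫ a, h' a ∂μ) s t₀ := by
  rw [hasDerivWithinAt_iff_tendsto_slope]
  have hmem : ∀ᶠ t in 𝓝[s \ {t₀}] t₀, t ∈ s \ {t₀} := self_mem_nhdsWithin
  have hslope : Tendsto (fun t => ∫ a, slope (fun r => h r a) t₀ t ∂μ)
      (𝓝[s \ {t₀}] t₀) (𝓝 (∫ a, h' a ∂μ)) := by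
    refine tendsto_integral_filter_of_dominated_convergence bound ?_ ?_ bound_int ?_
    · filter_upwards [hmem] with t ht
      exact (((h_int t ht.1).sub (h_int t₀ ht₀)).smul (t - t₀)⁻¹).aestronglyMeasurable
    · filter_upwards [hmem] with t ht
      filter_upwards [h_lip t ht.1] with a ha
      have hpos : 0 < ‖t - t₀‖ := norm_pos_iff.mpr (sub_ne_zero.mpr ht.2)
      rwa [slope_def_module, norm_smul, norm_inv, inv_mul_le_iff₀ hpos, mul_comm]
    · filter_upwards [h_deriv] with a ha
      exact hasDerivWithinAt_iff_tendsto_slope.mp ha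
  refine hslope.congr' ?_
  filter_upwards [hmem] with t ht
  simp only [slope_def_module]
  rw [integral_smul, integral_sub (h_int t ht.1) (h_int t₀ ht₀)]

theorem uIoc_subset_Ioi {α : Type*} [LinearOrder α] {a b x : α} (hx : a ≤ x) (hb : a ≤ b) :
    uIoc x b ⊆ Ioi a :=
  Ioc_subset_Ioi_self.trans (Ioi_subset_Ioi (le_min hx hb))

section Leibniz

variable {E : Type*} [NormedAddCommGroup E] [NormedSpace ℝ E] {h : ℝ → ℝ → E} {bound d : ℝ → ℝ}
  {s : Set ℝ} {a t₀ : ℝ}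

theorem tendsto_intervalIntegral_zero_of_continuousWithinAt {f : ℝ → E}
    (hf : IntegrableOn f (Ioi a)) (ht₀ : t₀ ∈ s) (hd : ContinuousWithinAt d s t₀)
    (had : ∀ t ∈ s, a ≤ d t) :
    Tendsto (fun t => ∫ y in d t..d t₀, f y) (𝓝[s] t₀) (𝓝 0) := by
  have hprim : Continuous fun x => ∫ y in x..d t₀, (Ioi a).indicator f y := by
    simp only [intervalIntegral.integral_symm (d t₀)]
    exact (intervalIntegral.continuous_primitive
      (fun _ _ => (hf.integrable_indicator measurableSet_Ioi).intervalIntegrable) _).neg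
  have hlim : Tendsto (fun t => ∫ y in d t..d t₀, (Ioi a).indicator f y) (𝓝[s] t₀) (𝓝 0) := by
    simpa only [ContinuousWithinAt, Function.comp_def, intervalIntegral.integral_same] using
      hprim.continuousAt.comp_continuousWithinAt hd
  refine hlim.congr' ?_
  filter_upwards [self_mem_nhdsWithin] with t ht
  refine intervalIntegral.integral_congr_ae (.of_forall fun y hy => ?_)
  exact indicator_of_mem (uIoc_subset_Ioi (had t ht) (had t₀ ht₀) hy) f

theorem hasDerivWithinAt_intervalIntegral_sub_zero_of_lip (ht₀ : t₀ ∈ s)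
    (hd : ContinuousWithinAt d s t₀) (had : ∀ t ∈ s, a ≤ d t)
    (h_lip : ∀ t ∈ s, ∀ y ∈ Ioi a, ‖h t y - h t₀ y‖ ≤ bound y * ‖t - t₀‖)
    (bound_int : IntegrableOn bound (Ioi a)) :
    HasDerivWithinAt (fun t => ∫ y in d t..d t₀, (h t y - h t₀ y)) 0 s t₀ := by
  have hsmall : (fun t => (∫ y in d t..d t₀, bound y) * (t - t₀)) =o[𝓝[s] t₀]
      fun t => 1 * (t - t₀) :=
    ((Asymptotics.isLittleO_one_iff ℝ).mpr
      (tendsto_intervalIntegral_zero_of_continuousWithinAt bound_int ht₀ hd had)).mul_isBigO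
      (Asymptotics.isBigO_refl _ _)
  simp only [one_mul] at hsmall
  rw [hasDerivWithinAt_iff_isLittleO]
  refine Asymptotics.IsBigO.trans_isLittleO (.of_bound 1 ?_) hsmall
  filter_upwards [self_mem_nhdsWithin] with t ht
  have hsub : uIoc (d t) (d t₀) ⊆ Ioi a := uIoc_subset_Ioi (had t ht) (had t₀ ht₀)
  have hbound : IntervalIntegrable bound volume (d t) (d t₀) :=
    intervalIntegrable_iff.mpr (bound_int.mono_set hsub)
  simp only [intervalIntegral.integral_same, sub_zero, smul_zero, one_mul]
  calc ‖∫ y in d t..d t₀, (h t y - h t₀ y)‖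
      ≤ |∫ y in d t..d t₀, bound y * ‖t - t₀‖| :=
        intervalIntegral.norm_integral_le_abs_of_norm_le
          ((ae_restrict_mem measurableSet_uIoc).mono fun y hy => h_lip t ht y (hsub hy))
          (hbound.mul_const _)
    _ = ‖(∫ y in d t..d t₀, bound y) * (t - t₀)‖ := by
        rw [intervalIntegral.integral_mul_const, abs_mul, abs_norm, norm_mul,
          Real.norm_eq_abs (∫ y in d t..d t₀, bound y)]

theorem integral_Ioi_eq_add_sub {f₁ f₂ : ℝ → E} {x b : ℝ} (hx : a ≤ x) (hb : a ≤ b)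
    (hf₁ : IntegrableOn f₁ (Ioi a)) (hf₂ : IntegrableOn f₂ (Ioi a)) :
    ∫ y in Ioi x, f₁ y =
      (∫ y in Ioi b, f₁ y) + (∫ y in x..b, (f₁ y - f₂ y)) - ∫ y in b..x, f₂ y := by
  have hinterval {f : ℝ → E} (hf : IntegrableOn f (Ioi a)) : IntervalIntegrable f volume x b :=
    intervalIntegrable_iff.mpr (hf.mono_set (uIoc_subset_Ioi hx hb))
  rw [intervalIntegral.integral_sub (hinterval hf₁) (hinterval hf₂),
    ← intervalIntegral.integral_Ioi_sub_Ioi' (hf₁.mono_set (Ioi_subset_Ioi hx))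
      (hf₁.mono_set (Ioi_subset_Ioi hb)), intervalIntegral.integral_symm x b]
  abel

theorem hasDerivWithinAt_integral_Ioi_of_dominated_of_lip [CompleteSpace E] {h' : ℝ → E} {d' : ℝ}
    (ht₀ : t₀ ∈ s) (hd : HasDerivWithinAt d d' s t₀) (had : ∀ t ∈ s, a < d t)
    (h_int : ∀ t ∈ s, IntegrableOn (h t) (Ioi a)) (h_cont : ContinuousAt (h t₀) (d t₀))
    (h_lip : ∀ t ∈ s, ∀ y ∈ Ioi a, ‖h t y - h t₀ y‖ ≤ bound y * ‖t - t₀‖)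
    (bound_int : IntegrableOn bound (Ioi a))
    (h_deriv : ∀ y ∈ Ioi a, HasDerivWithinAt (fun t => h t y) (h' y) s t₀) :
    HasDerivWithinAt (fun t => ∫ y in Ioi (d t), h t y)
      ((∫ y in Ioi (d t₀), h' y) - d' • h t₀ (d t₀)) s t₀ := by
  have hsub : Ioi (d t₀) ⊆ Ioi a := Ioi_subset_Ioi (had t₀ ht₀).le
  have hmem : ∀ᵐ y ∂volume.restrict (Ioi (d t₀)), y ∈ Ioi a :=
    (ae_restrict_mem measurableSet_Ioi).mono hsub
  have hfixed : HasDerivWithinAt (fun t => ∫ y in Ioi (d t₀), h t y)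
      (∫ y in Ioi (d t₀), h' y) s t₀ :=
    hasDerivWithinAt_integral_of_dominated_of_lip ht₀ (fun t ht => (h_int t ht).mono_set hsub)
      (fun t ht => hmem.mono (h_lip t ht)) (bound_int.mono_set hsub) (hmem.mono h_deriv)
  have hmixed : HasDerivWithinAt (fun t => ∫ y in d t..d t₀, (h t y - h t₀ y)) 0 s t₀ :=
    hasDerivWithinAt_intervalIntegral_sub_zero_of_lip ht₀ hd.continuousWithinAt
      (fun t ht => (had t ht).le) h_lip bound_int
  have hendpoint : HasDerivWithinAt (fun t => ∫ y in d t₀..d t, h t₀ y)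
      (d' • h t₀ (d t₀)) s t₀ :=
    (intervalIntegral.integral_hasDerivAt_right .refl
      ⟨Ioi a, Ioi_mem_nhds (had t₀ ht₀), (h_int t₀ ht₀).aestronglyMeasurable⟩
      h_cont).scomp_hasDerivWithinAt t₀ hd
  refine ((hfixed.add hmixed).sub hendpoint).congr_deriv (by rw [add_zero]) |>.congr_of_mem
    (fun t ht => ?_) ht₀
  exact integral_Ioi_eq_add_sub (had t ht).le (had t₀ ht₀).le (h_int t ht) (h_int t₀ ht₀)

end Leibniz

theorem integral_mul_deriv_add_mul_one_sub {u u' F f : ℝ → ℝ} {a b : ℝ}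
    (hu : ContinuousOn u (uIcc a b)) (hF : ContinuousOn F (uIcc a b))
    (huu' : ∀ y ∈ Ioo (min a b) (max a b), HasDerivAt u (u' y) y)
    (hFf : ∀ y ∈ Ioo (min a b) (max a b), HasDerivAt F (f y) y)
    (hu' : IntervalIntegrable u' volume a b) (hf : ∀ y ∈ Ioo (min a b) (max a b), 0 ≤ f y)
    (hua : u a = 0) :
    (∫ y in a..b, u y * f y) + u b * (1 - F b) = ∫ y in a..b, u' y * (1 - F y) := by
  have hparts : ∫ y in a..b, u y * f y =
      u b * (F b - 1) - u a * (F a - 1) - ∫ y in a..b, u' y * (F y - 1) :=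
    intervalIntegral.integral_mul_deriv_eq_deriv_mul_of_hasDerivAt hu (hF.sub continuousOn_const)
      huu' (fun y hy => (hFf y hy).sub_const 1) hu'
      (intervalIntegral.intervalIntegrable_deriv_of_nonneg hF hFf hf)
  have hneg : ∫ y in a..b, u' y * (1 - F y) = -∫ y in a..b, u' y * (F y - 1) := by
    rw [← intervalIntegral.integral_neg]
    exact intervalIntegral.integral_congr fun y _ => by ring
  rw [hparts, hneg, hua]
  ring

theorem lt_of_hasDerivWithinAt_pos_of_neg {J J' : ℝ → ℝ} {s : Set ℝ} {c t : ℝ} (hs : Convex ℝ s)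
    (hJ : ∀ x ∈ s, HasDerivWithinAt J (J' x) s x) (hpos : ∀ x ∈ s, x < c → 0 < J' x)
    (hneg : ∀ x ∈ s, c < x → J' x < 0) (hc : c ∈ s) (ht : t ∈ s) (hne : t ≠ c) : J t < J c := by
  have hcont : ContinuousOn J s := fun x hx => (hJ x hx).continuousWithinAt
  rcases hne.lt_or_gt with htc | hct
  · have hsub : Icc t c ⊆ s := hs.ordConnected.out ht hc
    refine strictMonoOn_of_hasDerivWithinAt_pos (convex_Icc t c) (hcont.mono hsub) (f' := J')
      (fun x hx => (hJ x (hsub (interior_subset hx))).mono (interior_subset.trans hsub))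
      (fun x hx => ?_) (left_mem_Icc.mpr htc.le) (right_mem_Icc.mpr htc.le) htc
    rw [interior_Icc] at hx
    exact hpos x (hsub (Ioo_subset_Icc_self hx)) hx.2
  · have hsub : Icc c t ⊆ s := hs.ordConnected.out hc ht
    refine strictAntiOn_of_hasDerivWithinAt_neg (convex_Icc c t) (hcont.mono hsub) (f' := J')
      (fun x hx => (hJ x (hsub (interior_subset hx))).mono (interior_subset.trans hsub))
      (fun x hx => ?_) (left_mem_Icc.mpr hct.le) (right_mem_Icc.mpr hct.le) hct
    rw [interior_Icc] at hx
    exact hneg x (hsub (Ioo_subset_Icc_self hx)) hx.1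

/-- The premium of the contract designed for type `t`: loading factor `1 + ξ t` times the expected
excess loss above the deductible `ξ t / γ`, the expectation being taken under type `t` and written
as the integral of the survival function. -/
noncomputable def reportPremium (γ : ℝ) (F : ℝ → ℝ → ℝ) (ξ : ℝ → ℝ) (t : ℝ) : ℝ :=
  (1 + ξ t) * ∫ y in Ioi (ξ t / γ), (1 - F y t)

/-- The utility `J^θ(t)` of a type-`θ` customer who reports `t`: minus the premium, minus the
mean-variance cost `E[X + γ/2 X²]` of the retained loss `X = min(Y, ξ t / γ)`. -/
noncomputable def reportUtility (γ : ℝ) (F f : ℝ → ℝ → ℝ) (ξ : ℝ → ℝ) (θ t : ℝ) : ℝ :=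
  -reportPremium γ F ξ t - (∫ y in (0 : ℝ)..(ξ t / γ), (y + γ / 2 * y ^ 2) * f y θ) -
    ξ t / γ * (1 + ξ t / 2) * (1 - F (ξ t / γ) θ)

section RiskType

variable {Θ : Set ℝ} {γ : ℝ} {F f Fθ : ℝ → ℝ → ℝ} {g ξ ξ' : ℝ → ℝ} {θ t : ℝ}

theorem reportUtility_eq_neg_reportPremium_sub_integral (hγ : 0 < γ) (hξpos : 0 < ξ t)
    (hFcont : ContinuousOn (fun y => F y θ) (Ici 0))
    (hFderiv : ∀ y, 0 < y → HasDerivAt (fun x => F x θ) (f y θ) y)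
    (hf_nonneg : ∀ y, 0 < y → 0 ≤ f y θ) :
    reportUtility γ F f ξ θ t =
      -reportPremium γ F ξ t - ∫ y in (0 : ℝ)..(ξ t / γ), (1 + γ * y) * (1 - F y θ) := by
  have hd : 0 ≤ ξ t / γ := (div_pos hξpos hγ).le
  have hpos : ∀ y ∈ Ioo (min 0 (ξ t / γ)) (max 0 (ξ t / γ)), 0 < y := fun y hy => by
    simpa only [min_eq_left hd] using hy.1
  have hcost : ∀ y : ℝ, HasDerivAt (fun x => x + γ / 2 * x ^ 2) (1 + γ * y) y := fun y =>
    ((hasDerivAt_id' y).add ((hasDerivAt_pow 2 y).const_mul (γ / 2))).congr_deriv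
      (by push_cast; ring)
  have hparts := integral_mul_deriv_add_mul_one_sub (b := ξ t / γ)
    (Continuous.continuousOn (by fun_prop))
    (hFcont.mono (by rw [uIcc_of_le hd]; exact Icc_subset_Ici_self)) (fun y _ => hcost y)
    (fun y hy => hFderiv y (hpos y hy)) (Continuous.intervalIntegrable (by fun_prop) _ _)
    (fun y hy => hf_nonneg y (hpos y hy)) (by ring)
  have hcost_deductible : ξ t / γ * (1 + ξ t / 2) = ξ t / γ + γ / 2 * (ξ t / γ) ^ 2 := by
    field_simp
  rw [reportUtility, ← hparts, hcost_deductible]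
  ring

theorem hasDerivWithinAt_reportPremium (hΘ : Convex ℝ Θ) (hγ : 0 < γ)
    (hFcont : ContinuousAt (fun y => F y t) (ξ t / γ))
    (hFint : ∀ r ∈ Θ, IntegrableOn (fun y => 1 - F y r) (Ioi 0))
    (hFθderiv : ∀ y, 0 < y → ∀ r ∈ Θ, HasDerivWithinAt (F y) (Fθ y r) Θ r)
    (hg_dom : ∀ y, 0 < y → ∀ r ∈ Θ, |Fθ y r| ≤ g y) (hg_int : IntegrableOn g (Ioi 0))
    (hξpos : ∀ r ∈ Θ, 0 < ξ r) (hξderiv : HasDerivWithinAt ξ (ξ' t) Θ t)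
    (hODE : ξ' t * (∫ y in Ioi (ξ t / γ), (1 - F y t)) +
      (1 + ξ t) * -∫ y in Ioi (ξ t / γ), Fθ y t = 0)
    (ht : t ∈ Θ) :
    HasDerivWithinAt (reportPremium γ F ξ)
      (-(ξ' t / γ * ((1 + ξ t) * (1 - F (ξ t / γ) t)))) Θ t := by
  have h_lip : ∀ r ∈ Θ, ∀ y ∈ Ioi 0, ‖(1 - F y r) - (1 - F y t)‖ ≤ g y * ‖r - t‖ := by
    intro r hr y hy
    rw [sub_sub_sub_cancel_left, norm_sub_rev]
    exact hΘ.norm_image_sub_le_of_norm_hasDerivWithin_le (hFθderiv y hy) (hg_dom y hy) ht hr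
  have hexcess : HasDerivWithinAt (fun r => ∫ y in Ioi (ξ r / γ), (1 - F y r))
      ((∫ y in Ioi (ξ t / γ), -Fθ y t) - (ξ' t / γ) • (1 - F (ξ t / γ) t)) Θ t :=
    hasDerivWithinAt_integral_Ioi_of_dominated_of_lip (h := fun r y => 1 - F y r) ht
      (hξderiv.div_const γ) (fun r hr => div_pos (hξpos r hr) hγ) hFint
      (continuousAt_const.sub hFcont) h_lip hg_int fun y hy => (hFθderiv y hy t ht).const_sub 1
  refine ((hξderiv.const_add 1).mul hexcess).congr_deriv ?_
  rw [integral_neg, smul_eq_mul]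
  linear_combination hODE

theorem hasDerivWithinAt_integral_deductible (hγ : 0 < γ) {G : ℝ → ℝ} (hG : ContinuousOn G (Ici 0))
    (hξpos : 0 < ξ t) (hξderiv : HasDerivWithinAt ξ (ξ' t) Θ t) :
    HasDerivWithinAt (fun r => ∫ y in (0 : ℝ)..(ξ r / γ), (1 + γ * y) * (1 - G y))
      (ξ' t / γ * ((1 + ξ t) * (1 - G (ξ t / γ)))) Θ t := by
  have hd : 0 < ξ t / γ := div_pos hξpos hγ
  have hcont : ContinuousOn (fun y => (1 + γ * y) * (1 - G y)) (Ici 0) :=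
    ContinuousOn.mul (by fun_prop) (continuousOn_const.sub hG)
  have hsub : uIcc 0 (ξ t / γ) ⊆ Ici 0 := by
    rw [uIcc_of_le hd.le]
    exact Icc_subset_Ici_self
  have hftc := intervalIntegral.integral_hasDerivAt_right (hcont.mono hsub).intervalIntegrable
    ((hcont.mono Ioi_subset_Ici_self).stronglyMeasurableAtFilter isOpen_Ioi _ hd)
    (hcont.continuousAt (Ici_mem_nhds hd))
  rw [mul_div_cancel₀ (ξ t) hγ.ne'] at hftc
  exact hftc.scomp_hasDerivWithinAt t (hξderiv.div_const γ)

theorem hasDerivWithinAt_reportUtility (hΘ : Convex ℝ Θ) (hγ : 0 < γ)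
    (hFcont : ∀ r ∈ Θ, ContinuousOn (fun y => F y r) (Ici 0))
    (hFderiv : ∀ y, 0 < y → HasDerivAt (fun x => F x θ) (f y θ) y)
    (hf_nonneg : ∀ y, 0 < y → 0 ≤ f y θ)
    (hFint : ∀ r ∈ Θ, IntegrableOn (fun y => 1 - F y r) (Ioi 0))
    (hFθderiv : ∀ y, 0 < y → ∀ r ∈ Θ, HasDerivWithinAt (F y) (Fθ y r) Θ r)
    (hg_dom : ∀ y, 0 < y → ∀ r ∈ Θ, |Fθ y r| ≤ g y) (hg_int : IntegrableOn g (Ioi 0))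
    (hξpos : ∀ r ∈ Θ, 0 < ξ r) (hξderiv : HasDerivWithinAt ξ (ξ' t) Θ t)
    (hODE : ξ' t * (∫ y in Ioi (ξ t / γ), (1 - F y t)) +
      (1 + ξ t) * -∫ y in Ioi (ξ t / γ), Fθ y t = 0)
    (hθ : θ ∈ Θ) (ht : t ∈ Θ) :
    HasDerivWithinAt (reportUtility γ F f ξ θ)
      (ξ' t / γ * (1 + ξ t) * (F (ξ t / γ) θ - F (ξ t / γ) t)) Θ t := by
  have hpremium := hasDerivWithinAt_reportPremium hΘ hγ
    ((hFcont t ht).continuousAt (Ici_mem_nhds (div_pos (hξpos t ht) hγ))) hFint hFθderiv hg_dom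
    hg_int hξpos hξderiv hODE ht
  have hretained := hasDerivWithinAt_integral_deductible hγ (hFcont θ hθ) (hξpos t ht) hξderiv
  refine ((hpremium.neg.sub hretained).congr_deriv (by ring)).congr_of_mem (fun r hr => ?_) ht
  exact reportUtility_eq_neg_reportPremium_sub_integral hγ (hξpos r hr) (hFcont θ hθ) hFderiv
    hf_nonneg

theorem truth_telling_risk_type_general (hΘ : Convex ℝ Θ) (hγ : 0 < γ)
    (hFcont : ∀ r ∈ Θ, ContinuousOn (fun y => F y r) (Ici 0))
    (hFderiv : ∀ r ∈ Θ, ∀ y, 0 < y → HasDerivAt (fun x => F x r) (f y r) y)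
    (hf_nonneg : ∀ r ∈ Θ, ∀ y, 0 < y → 0 ≤ f y r)
    (hFint : ∀ r ∈ Θ, IntegrableOn (fun y => 1 - F y r) (Ioi 0))
    (hFθderiv : ∀ y, 0 < y → ∀ r ∈ Θ, HasDerivWithinAt (F y) (Fθ y r) Θ r)
    (hFθneg : ∀ y, 0 < y → ∀ r ∈ Θ, Fθ y r < 0)
    (hg_dom : ∀ y, 0 < y → ∀ r ∈ Θ, |Fθ y r| ≤ g y) (hg_int : IntegrableOn g (Ioi 0))
    (hξpos : ∀ r ∈ Θ, 0 < ξ r) (hξderiv : ∀ r ∈ Θ, HasDerivWithinAt ξ (ξ' r) Θ r)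
    (hξ'neg : ∀ r ∈ Θ, ξ' r < 0)
    (hODE : ∀ r ∈ Θ, ξ' r * (∫ y in Ioi (ξ r / γ), (1 - F y r)) +
      (1 + ξ r) * -∫ y in Ioi (ξ r / γ), Fθ y r = 0)
    (hθ : θ ∈ Θ) (ht : t ∈ Θ) (hne : t ≠ θ) :
    reportUtility γ F f ξ θ t < reportUtility γ F f ξ θ θ := by
  have hanti : ∀ y, 0 < y → StrictAntiOn (F y) Θ := fun y hy =>
    strictAntiOn_of_hasDerivWithinAt_neg hΘ (fun r hr => (hFθderiv y hy r hr).continuousWithinAt)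
      (fun r hr => (hFθderiv y hy r (interior_subset hr)).mono interior_subset)
      (fun r hr => hFθneg y hy r (interior_subset hr))
  have hfactor : ∀ r ∈ Θ, ξ' r / γ * (1 + ξ r) < 0 := fun r hr =>
    mul_neg_of_neg_of_pos (div_neg_of_neg_of_pos (hξ'neg r hr) hγ)
      (add_pos one_pos (hξpos r hr))
  refine lt_of_hasDerivWithinAt_pos_of_neg hΘ
    (fun r hr => hasDerivWithinAt_reportUtility hΘ hγ hFcont (hFderiv θ hθ) (hf_nonneg θ hθ) hFint
      hFθderiv hg_dom hg_int hξpos (hξderiv r hr) (hODE r hr) hθ hr)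
    (fun r hr hrθ => ?_) (fun r hr hθr => ?_) hθ ht hne
  · exact mul_pos_of_neg_of_neg (hfactor r hr)
      (sub_neg.mpr (hanti _ (div_pos (hξpos r hr) hγ) hr hθ hrθ))
  · exact mul_neg_of_neg_of_pos (hfactor r hr)
      (sub_pos.mpr (hanti _ (div_pos (hξpos r hr) hγ) hθ hr hθr))

end RiskType

end

/-- truth-telling verification of Theorem 4.6(4): under risk-type
uncertainty with constant risk aversion γ > 0, claim-size CDFs F(·; θ) with
density f(·; θ), ∂_θF < 0 with dominated, jointly continuous θ-derivative and the
stated tail conditions, and a positive strictly decreasing loading schedule ξ(θ)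
solving the truth-telling ODE, the utility
J^θ(θ̃) = −(1 + ξ(θ̃))·∫_{ξ(θ̃)/γ}^∞ (1 − F(y; θ̃)) dy
          − ∫_0^{ξ(θ̃)/γ} (y + (γ/2)y²) f(y; θ) dy
          − (ξ(θ̃)/γ)(1 + ξ(θ̃)/2)(1 − F(ξ(θ̃)/γ; θ))
is maximized over θ̃ ∈ [θ_L, θ_H] at θ̃ = θ, strictly whenever θ̃ ≠ θ and
F(ξ(s)/γ; θ) ≠ F(ξ(s)/γ; s) somewhere on the path between θ and θ̃.
Here F y θ denotes F(y; θ), f y θ its y-density, Fθ y θ its θ-derivative. -/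
theorem truth_telling_risk_type
    (θL θH γ : ℝ) (hθ : θL < θH) (hγ : 0 < γ)
    (F f : ℝ → ℝ → ℝ)
    (hFderiv_y : ∀ θ ∈ Set.Icc θL θH, ∀ y : ℝ, 0 ≤ y →
      HasDerivAt (fun s => F s θ) (f y θ) y)
    (hf_nonneg : ∀ θ ∈ Set.Icc θL θH, ∀ y : ℝ, 0 ≤ y → 0 ≤ f y θ)
    (hF0 : ∀ θ ∈ Set.Icc θL θH, F 0 θ = 0)
    (hFrange : ∀ θ ∈ Set.Icc θL θH, ∀ y : ℝ, 0 ≤ y → F y θ ∈ Set.Icc (0 : ℝ) 1)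
    (hFint : ∀ θ ∈ Set.Icc θL θH,
      IntegrableOn (fun y => 1 - F y θ) (Set.Ioi 0))
    (hFtail : ∀ θ ∈ Set.Icc θL θH,
      Filter.Tendsto (fun y => y * (1 - F y θ)) Filter.atTop (nhds 0))
    (Fθ : ℝ → ℝ → ℝ)
    (hFθderiv : ∀ y : ℝ, 0 ≤ y → ∀ θ ∈ Set.Icc θL θH,
      HasDerivAt (fun t => F y t) (Fθ y θ) θ)
    (hFθneg : ∀ y : ℝ, 0 < y → ∀ θ ∈ Set.Icc θL θH, Fθ y θ < 0)
    (hFθjc : ContinuousOn (fun p : ℝ × ℝ => Fθ p.1 p.2)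
      (Set.Ici 0 ×ˢ Set.Icc θL θH))
    (g : ℝ → ℝ)
    (hg_dom : ∀ y : ℝ, 0 ≤ y → ∀ θ ∈ Set.Icc θL θH, |Fθ y θ| ≤ g y)
    (hg_int : IntegrableOn (fun y => (1 + y) * g y) (Set.Ioi 0))
    (hFθtail : ∀ θ ∈ Set.Icc θL θH,
      Filter.Tendsto (fun y => y * |Fθ y θ|) Filter.atTop (nhds 0))
    (ξ ξ' : ℝ → ℝ)
    (hξpos : ∀ θ ∈ Set.Icc θL θH, 0 < ξ θ)
    (hξderiv : ∀ θ ∈ Set.Icc θL θH, HasDerivAt ξ (ξ' θ) θ)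
    (hξ'cont : ContinuousOn ξ' (Set.Icc θL θH))
    (hξ'neg : ∀ θ ∈ Set.Icc θL θH, ξ' θ < 0)
    (Ψ Ψθ : ℝ → ℝ → ℝ)
    (hΨ : ∀ θ x : ℝ, Ψ θ x = ∫ y in Set.Ioi (x / γ), (1 - F y θ))
    (hΨθ : ∀ θ x : ℝ, Ψθ θ x = -∫ y in Set.Ioi (x / γ), Fθ y θ)
    (hODE : ∀ θ ∈ Set.Icc θL θH,
      ξ' θ * Ψ θ (ξ θ) + (1 + ξ θ) * Ψθ θ (ξ θ) = 0)
    (J : ℝ → ℝ → ℝ)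
    (hJ : ∀ θ θt : ℝ, J θ θt =
      -((1 + ξ θt) * ∫ y in Set.Ioi (ξ θt / γ), (1 - F y θt)) -
        (∫ y in (0 : ℝ)..(ξ θt / γ), (y + γ / 2 * y ^ 2) * f y θ) -
        (ξ θt / γ) * (1 + ξ θt / 2) * (1 - F (ξ θt / γ) θ)) :
    ∀ θ ∈ Set.Icc θL θH,
      (∀ θt ∈ Set.Icc θL θH, J θ θt ≤ J θ θ) ∧
      (∀ θt ∈ Set.Icc θL θH, θt ≠ θ →
        (∃ s ∈ Set.uIcc θ θt, F (ξ s / γ) θ ≠ F (ξ s / γ) s) →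
        J θ θt < J θ θ) := by
  obtain rfl : J = reportUtility γ F f ξ := funext₂ hJ
  have hg : IntegrableOn g (Set.Ioi 0) :=
    integrable_of_integrable_mul_of_one_le (by fun_prop)
      ((ae_restrict_mem measurableSet_Ioi).mono fun y hy => le_add_of_nonneg_right (le_of_lt hy))
      hg_int
  simp only [hΨ, hΨθ] at hODE
  intro θ hθmem
  have hlt : ∀ t ∈ Set.Icc θL θH, t ≠ θ →
      reportUtility γ F f ξ θ t < reportUtility γ F f ξ θ θ := fun t ht hne =>
    truth_telling_risk_type_general (convex_Icc θL θH) hγ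
      (fun r hr y hy => (hFderiv_y r hr y hy).continuousAt.continuousWithinAt)
      (fun r hr y hy => hFderiv_y r hr y hy.le) (fun r hr y hy => hf_nonneg r hr y hy.le) hFint
      (fun y hy r hr => (hFθderiv y hy.le r hr).hasDerivWithinAt) hFθneg
      (fun y hy => hg_dom y hy.le) hg hξpos (fun r hr => (hξderiv r hr).hasDerivWithinAt) hξ'neg
      hODE hθmem ht hne
  refine ⟨fun t ht => ?_, fun t ht hne _ => hlt t ht hne⟩
  obtain rfl | hne := eq_or_ne t θ
  exacts [le_rfl, (hlt t ht hne).le]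
end

section
/- Let γ > 0 and C be real numbers, and let I ⊆ (0, ∞) be an open interval on which D(θ) := 1 + γ·θ − C·θ·e^{1/(γ·θ)} > 0. Then the function ξ(θ) := 1/D(θ) − 1 is differentiable on I and satisfies θ·ξ'(θ) = −(1 + ξ(θ))·(1 + ξ(θ)/(θ·γ)) for all θ ∈ I. -/
/-!
The substitution `ξ = 1 / D - 1` turns the Riccati-type equation for `ξ` into the linear equation
`θ * D' = D + (1 - D) / (θ * γ)`. The function `1 + γ * θ` is a particular solution of the latter,
and `θ * exp (1 / (γ * θ))` spans the solutions of its homogeneous part.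
-/

theorem riccati_one_div_sub_one_of_linear {𝕜 : Type*} [Field 𝕜] {x D D' a : 𝕜} (hD : D ≠ 0)
    (hlinear : x * D' = D + (1 - D) / a) :
    x * (-D' / D ^ 2) = -((1 + (1 / D - 1)) * (1 + (1 / D - 1) / a)) :=
  calc
    x * (-D' / D ^ 2) = -(x * D') / D ^ 2 := by ring
    _ = -(D + (1 - D) / a) / D ^ 2 := by rw [hlinear]
    _ = -((1 + (1 / D - 1)) * (1 + (1 / D - 1) / a)) := by
      have one_div_sub_one : 1 / D - 1 = (1 - D) / D := by field_simp
      rw [add_sub_cancel, one_div_sub_one]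
      field_simp

theorem hasDerivAt_one_div_sub_one {𝕜 : Type*} [NontriviallyNormedField 𝕜] {D : 𝕜 → 𝕜} {D' x : 𝕜}
    (hderiv : HasDerivAt D D' x) (hD : D x ≠ 0) :
    HasDerivAt (fun t => 1 / D t - 1) (-D' / D x ^ 2) x := by
  simpa only [one_div] using (hderiv.fun_inv hD).sub_const 1

theorem hasDerivAt_mul_exp_div (c : ℝ) {x : ℝ} (hx : x ≠ 0) :
    HasDerivAt (fun t => t * Real.exp (c / t)) (Real.exp (c / x) * (1 - c / x)) x := by
  have hasDerivAt_exponent : HasDerivAt (fun t => c / t) (-c / x ^ 2) x := by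
    simpa [div_eq_mul_inv] using (hasDerivAt_inv hx).const_mul c
  refine ((hasDerivAt_id' x).fun_mul hasDerivAt_exponent.exp).congr_deriv ?_
  field_simp
  ring

/-- The denominator `D(θ) = 1 + γθ - Cθ e^{1/(γθ)}` of the closed-form risk loading
`ξ = 1 / D - 1`, with integration constant `C`. -/
noncomputable def loadingDenominator (γ C θ : ℝ) : ℝ :=
  1 + γ * θ - C * θ * Real.exp (1 / (γ * θ))

theorem hasDerivAt_loadingDenominator (γ C : ℝ) {θ : ℝ} (hθ : θ ≠ 0) :
    HasDerivAt (loadingDenominator γ C)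
      (γ - C * (Real.exp (1 / (γ * θ)) * (1 - 1 / (γ * θ)))) θ := by
  have hasDerivAt_particular : HasDerivAt (fun t => 1 + γ * t) γ θ := by
    simpa using ((hasDerivAt_id' θ).const_mul γ).const_add 1
  have hasDerivAt_homogeneous := (hasDerivAt_mul_exp_div (1 / γ) hθ).const_mul C
  unfold loadingDenominator
  simpa only [div_mul_eq_div_div, mul_assoc] using
    hasDerivAt_particular.fun_sub hasDerivAt_homogeneous

theorem loadingDenominator_linear_ode {γ θ : ℝ} (C : ℝ) (hγ : γ ≠ 0) (hθ : θ ≠ 0) :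
    θ * (γ - C * (Real.exp (1 / (γ * θ)) * (1 - 1 / (γ * θ)))) =
      loadingDenominator γ C θ + (1 - loadingDenominator γ C θ) / (θ * γ) := by
  unfold loadingDenominator
  generalize Real.exp (1 / (γ * θ)) = E
  field_simp
  ring

theorem exponential_closed_form_solves_ode_general {γ C θ : ℝ} (hγ : γ ≠ 0) (hθ : θ ≠ 0)
    (hD : loadingDenominator γ C θ ≠ 0) :
    ∃ d : ℝ, HasDerivAt (fun t => 1 / loadingDenominator γ C t - 1) d θ ∧
      θ * d = -((1 + (1 / loadingDenominator γ C θ - 1)) *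
        (1 + (1 / loadingDenominator γ C θ - 1) / (θ * γ))) :=
  ⟨_, hasDerivAt_one_div_sub_one (hasDerivAt_loadingDenominator γ C hθ) hD,
    riccati_one_div_sub_one_of_linear hD (loadingDenominator_linear_ode C hγ hθ)⟩

/-- closed-form solution from Section 5.2. For γ > 0 and a constant C,
on any open interval I ⊆ (0, ∞) on which D(θ) = 1 + γθ − Cθ·e^{1/(γθ)} > 0, the
function ξ(θ) = 1/D(θ) − 1 is differentiable and satisfies
θ·ξ'(θ) = −(1 + ξ(θ))·(1 + ξ(θ)/(θγ)). -/
theorem exponential_closed_form_solves_ode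
    (γ C : ℝ) (hγ : 0 < γ)
    (I : Set ℝ) (hI : ∃ a b : ℝ, I = Set.Ioo a b)
    (hIpos : I ⊆ Set.Ioi 0)
    (hD : ∀ θ ∈ I, 0 < 1 + γ * θ - C * θ * Real.exp (1 / (γ * θ))) :
    ∀ θ ∈ I, ∃ d : ℝ,
      HasDerivAt (fun t : ℝ =>
        1 / (1 + γ * t - C * t * Real.exp (1 / (γ * t))) - 1) d θ ∧
      θ * d =
        -((1 + (1 / (1 + γ * θ - C * θ * Real.exp (1 / (γ * θ))) - 1)) *
          (1 + (1 / (1 + γ * θ - C * θ * Real.exp (1 / (γ * θ))) - 1) /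
            (θ * γ))) := by
  intro θ hθ
  exact exponential_closed_form_solves_ode_general hγ.ne' (hIpos hθ).ne' (hD θ hθ).ne'
end

section
/- Let γ > 0 and 0 < θ_L ≤ θ_H be real numbers. Then 0 < 1 − γ·θ_L·ln((1 + γ·θ_L)/(γ·θ_L)) < 1, and the inequality ((1 + γ·θ_L)/θ_L)·e^{−1/(γ·θ_L)} ≥ γ·e^{−1/(γ·θ_H)} holds if and only if θ_H ≤ θ_L/(1 − γ·θ_L·ln((1 + γ·θ_L)/(γ·θ_L))). -/
/-!
Taking logarithms turns the comparison of the two exponential bounds into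
`1 / (γ * θL) - log ((1 + γ * θL) / (γ * θL)) ≤ 1 / (γ * θH)`. The left side is
`(1 - γ * θL * log ((1 + γ * θL) / (γ * θL))) / (γ * θL)`, which is positive because `log r < r - 1`
for positive `r ≠ 1`, so taking reciprocals gives the upper bound on `θH`.
-/

theorem one_lt_one_add_div_self {K : Type*} [Field K] [LinearOrder K] [IsStrictOrderedRing K]
    {x : K} (hx : 0 < x) : 1 < (1 + x) / x :=
  (one_lt_div hx).2 (lt_one_add x)

theorem mul_log_one_add_div_self_pos {x : ℝ} (hx : 0 < x) : 0 < x * Real.log ((1 + x) / x) :=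
  mul_pos hx (Real.log_pos (one_lt_one_add_div_self hx))

theorem mul_log_one_add_div_self_lt_one {x : ℝ} (hx : 0 < x) :
    x * Real.log ((1 + x) / x) < 1 := by
  have one_lt_ratio := one_lt_one_add_div_self hx
  calc x * Real.log ((1 + x) / x)
    _ < x * ((1 + x) / x - 1) := by
      gcongr
      exact Real.log_lt_sub_one_of_pos (zero_lt_one.trans one_lt_ratio) one_lt_ratio.ne'
    _ = 1 := by field_simp; ring

theorem mul_exp_neg_le_mul_exp_neg_iff {a b u v : ℝ} (ha : 0 < a) (hb : 0 < b) :
    a * Real.exp (-u) ≤ b * Real.exp (-v) ↔ v - Real.log (b / a) ≤ u := by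
  rw [← Real.log_le_log_iff (by positivity) (by positivity),
    Real.log_mul ha.ne' (Real.exp_ne_zero _), Real.log_mul hb.ne' (Real.exp_ne_zero _),
    Real.log_exp, Real.log_exp, Real.log_div hb.ne' ha.ne']
  constructor <;> intro h <;> linarith

theorem one_div_mul_sub_le_one_div_mul_iff {K : Type*} [Field K] [LinearOrder K]
    [IsStrictOrderedRing K] {c x y l : K} (hc : 0 < c) (hx : 0 < x) (hy : 0 < y)
    (hl : 0 < 1 - c * x * l) :
    1 / (c * x) - l ≤ 1 / (c * y) ↔ y ≤ x / (1 - c * x * l) := by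
  have sub_eq_one_div : 1 / (c * x) - l = 1 / (c * (x / (1 - c * x * l))) := by
    field_simp
  rw [sub_eq_one_div, one_div_le_one_div (by positivity) (by positivity),
    mul_le_mul_iff_right₀ hc]

theorem feasibility_condition_exponential_general
    (γ θL θH : ℝ) (hγ : 0 < γ) (hθL : 0 < θL) (hθH : 0 < θH) :
    (0 < 1 - γ * θL * Real.log ((1 + γ * θL) / (γ * θL)) ∧
      1 - γ * θL * Real.log ((1 + γ * θL) / (γ * θL)) < 1) ∧
    (((1 + γ * θL) / θL) * Real.exp (-(1 / (γ * θL))) ≥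
        γ * Real.exp (-(1 / (γ * θH))) ↔
      θH ≤ θL / (1 - γ * θL * Real.log ((1 + γ * θL) / (γ * θL)))) := by
  have hγθL : 0 < γ * θL := mul_pos hγ hθL
  have denom_pos := sub_pos.2 (mul_log_one_add_div_self_lt_one hγθL)
  refine ⟨⟨denom_pos, sub_lt_self 1 (mul_log_one_add_div_self_pos hγθL)⟩, ?_⟩
  rw [ge_iff_le, mul_exp_neg_le_mul_exp_neg_iff hγ (by positivity), div_div, mul_comm θL γ]
  exact one_div_mul_sub_le_one_div_mul_iff hγ hθL hθH denom_pos

/-- the existence condition from the remark in Section 5.2. For γ > 0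
and 0 < θ_L ≤ θ_H: 0 < 1 − γθ_L·ln((1 + γθ_L)/(γθ_L)) < 1, and
((1 + γθ_L)/θ_L)·e^{−1/(γθ_L)} ≥ γ·e^{−1/(γθ_H)} if and only if
θ_H ≤ θ_L/(1 − γθ_L·ln((1 + γθ_L)/(γθ_L))). -/
theorem feasibility_condition_exponential
    (γ θL θH : ℝ) (hγ : 0 < γ) (hθL : 0 < θL) (hθ : θL ≤ θH) :
    (0 < 1 - γ * θL * Real.log ((1 + γ * θL) / (γ * θL)) ∧
      1 - γ * θL * Real.log ((1 + γ * θL) / (γ * θL)) < 1) ∧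
    (((1 + γ * θL) / θL) * Real.exp (-(1 / (γ * θL))) ≥
        γ * Real.exp (-(1 / (γ * θH))) ↔
      θH ≤ θL / (1 - γ * θL * Real.log ((1 + γ * θL) / (γ * θL)))) :=
  feasibility_condition_exponential_general γ θL θH hγ hθL (hθL.trans_le hθ)
end
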